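/- arXiv:2108.05984 — 5 statements merged into one kernel-verified Lean document; each statement's English description precedes it below -/
import Mathlib

section
/- Let X_1, X_2, ... be an infinite sequence of {0,1}-valued exchangeable random variables. Then there exists a probability measure μ on [0,1] such that for every positive integer n and all x_1, ..., x_n ∈ {0,1}, Pr(X_1 = x_1, ..., X_n = x_n) = ∫_0^1 p^s (1−p)^{n−s} dμ(p), where s = x_1 + ... + x_n. Furthermore, the measure μ is uniquely determined. -/
open MeasureTheory

namespace DeFinettiAux

open Filter Topology

/-- A finite measure on the unit interval is determined by its moments. -/
lemma measure_ext (μ ν : Measure (Set.Icc (0 : ℝ) 1)) [IsProbabilityMeasure μ]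
    [IsProbabilityMeasure ν]
    (h : ∀ n : ℕ, ∫ p : Set.Icc (0 : ℝ) 1, (p : ℝ) ^ n ∂μ = ∫ p : Set.Icc (0 : ℝ) 1, (p : ℝ) ^ n ∂ν) :
    μ = ν := by
  have hint : ∀ (ρ : Measure (Set.Icc (0 : ℝ) 1)) [IsProbabilityMeasure ρ]
      (f : C(Set.Icc (0 : ℝ) 1, ℝ)), Integrable f ρ := by
    intro ρ _ f
    exact (BoundedContinuousFunction.mkOfCompact f).integrable ρ
  have hcont : ∀ (ρ : Measure (Set.Icc (0 : ℝ) 1)) [IsProbabilityMeasure ρ],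
      Continuous (fun f : C(Set.Icc (0 : ℝ) 1, ℝ) => ∫ p, f p ∂ρ) := by
    intro ρ _
    refine LipschitzWith.continuous (K := 1) (LipschitzWith.of_dist_le_mul fun f g => ?_)
    rw [dist_eq_norm, ← integral_sub (hint ρ f) (hint ρ g)]
    refine (norm_integral_le_of_norm_le_const (C := dist f g) ?_).trans ?_
    · exact Filter.Eventually.of_forall fun p => by
        rw [← dist_eq_norm]; exact ContinuousMap.dist_apply_le_dist p
    · simp
  have hpoly : ∀ q : Polynomial ℝ, ∫ p : Set.Icc (0 : ℝ) 1, q.eval (p : ℝ) ∂μ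
      = ∫ p : Set.Icc (0 : ℝ) 1, q.eval (p : ℝ) ∂ν := by
    intro q
    have hi : ∀ (ρ : Measure (Set.Icc (0 : ℝ) 1)) [IsProbabilityMeasure ρ],
        ∫ p : Set.Icc (0 : ℝ) 1, q.eval (p : ℝ) ∂ρ
          = ∑ i ∈ Finset.range (q.natDegree + 1), q.coeff i * ∫ p : Set.Icc (0 : ℝ) 1, (p : ℝ) ^ i ∂ρ := by
      intro ρ _
      simp_rw [Polynomial.eval_eq_sum_range]
      rw [integral_finsetSum]
      · simp_rw [integral_const_mul]
      · intro i _
        exact hint ρ ⟨fun p => q.coeff i * (p : ℝ) ^ i, by fun_prop⟩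
    rw [hi μ, hi ν]
    simp_rw [h]
  have hall : ∀ f : C(Set.Icc (0 : ℝ) 1, ℝ), ∫ p, f p ∂μ = ∫ p, f p ∂ν := by
    intro f
    have hf := continuousMap_mem_polynomialFunctions_closure 0 1 f
    have hcl : IsClosed {f : C(Set.Icc (0 : ℝ) 1, ℝ) | ∫ p, f p ∂μ = ∫ p, f p ∂ν} :=
      isClosed_eq (hcont μ) (hcont ν)
    refine closure_minimal ?_ hcl hf
    intro g hg
    have hg : g ∈ (polynomialFunctions (Set.Icc (0 : ℝ) 1) : Set C(Set.Icc (0 : ℝ) 1, ℝ)) := hg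
    rw [polynomialFunctions_coe] at hg
    obtain ⟨q, rfl⟩ := hg
    exact hpoly q
  exact ext_of_forall_integral_eq_of_IsFiniteMeasure fun f => hall f.toContinuousMap

section

variable {Ω : Type*} [MeasurableSpace Ω] (ℙ : Measure Ω) [IsProbabilityMeasure ℙ]
  (X : ℕ → Ω → ℕ)

/-- Exchangeability along an injection of indices. -/
lemma prob_injective (hmeas : ∀ i, Measurable (X i))
    (hexch : ∀ (n : ℕ) (σ : Equiv.Perm (Fin n)),
      Measure.map (fun ω (i : Fin n) => X (σ i) ω) ℙ
        = Measure.map (fun ω (i : Fin n) => X i ω) ℙ)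
    {n N : ℕ} (f : Fin n → Fin N) (hf : Function.Injective f) (x : Fin n → ℕ) :
    ℙ {ω | ∀ i : Fin n, X (f i) ω = x i} = ℙ {ω | ∀ i : Fin n, X i ω = x i} := by
  have hnN : n ≤ N := by simpa using Fintype.card_le_of_injective f hf
  obtain ⟨σ, hσ⟩ := Equiv.Perm.exists_extending_pair (Fin.castLE hnN) f
    (Fin.castLE_injective hnN) hf
  have hS : MeasurableSet {y : Fin N → ℕ | ∀ i : Fin n, y (Fin.castLE hnN i) = x i} := by
    have : {y : Fin N → ℕ | ∀ i : Fin n, y (Fin.castLE hnN i) = x i}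
        = ⋂ i, (fun y : Fin N → ℕ => y (Fin.castLE hnN i)) ⁻¹' {x i} := by ext; simp
    rw [this]
    exact MeasurableSet.iInter fun i => measurable_pi_apply _ (measurableSet_singleton _)
  have h := congrArg (fun m => m {y : Fin N → ℕ | ∀ i : Fin n, y (Fin.castLE hnN i) = x i})
    (hexch N σ)
  rw [Measure.map_apply (measurable_pi_lambda _ fun i => hmeas _) hS,
    Measure.map_apply (measurable_pi_lambda _ fun i => hmeas _) hS] at h
  simpa [Set.preimage, hσ] using h

/-- The empirical mean of the first `N + 1` variables. -/
noncomputable def avg (N : ℕ) (ω : Ω) : ℝ := (∑ i : Fin (N + 1), (X i ω : ℝ)) / (N + 1)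

lemma avg_mem (hbin : ∀ i ω, X i ω = 0 ∨ X i ω = 1) (N : ℕ) (ω : Ω) :
    avg X N ω ∈ Set.Icc (0 : ℝ) 1 := by
  unfold avg
  constructor
  · positivity
  · rw [div_le_one (by positivity)]
    calc ∑ i : Fin (N + 1), (X i ω : ℝ) ≤ ∑ i : Fin (N + 1), (1 : ℝ) := by
          refine Finset.sum_le_sum fun i _ => ?_
          rcases hbin i ω with h | h <;> simp [h]
      _ = N + 1 := by simp

lemma measurable_avg (hmeas : ∀ i, Measurable (X i)) (N : ℕ) : Measurable (avg X N) := by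
  unfold avg
  refine Measurable.div_const (Finset.measurable_fun_sum _ fun i _ => ?_) _
  exact (measurable_from_top (f := fun k : ℕ => (k : ℝ))).comp (hmeas i)

/-- Product expansion of the Bernoulli polynomial at the empirical mean. -/
lemma avg_expand (hbin : ∀ i ω, X i ω = 0 ∨ X i ω = 1) (N n : ℕ) (x : Fin n → ℕ)
    (hx : ∀ i, x i = 0 ∨ x i = 1) (ω : Ω) :
    avg X N ω ^ (∑ i, x i) * (1 - avg X N ω) ^ (n - ∑ i, x i)
      = (∑ f : Fin n → Fin (N + 1),
          Set.indicator {ω | ∀ j, X (f j) ω = x j} (fun _ => (1 : ℝ)) ω) / ((N : ℝ) + 1) ^ n := by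
  classical
  have h1 : ∀ j, (∑ i : Fin (N + 1), if X i ω = x j then (1 : ℝ) else 0) / ((N : ℝ) + 1)
      = avg X N ω ^ (x j) * (1 - avg X N ω) ^ (1 - x j) := by
    intro j
    rcases hx j with h | h
    · have : ∀ i : Fin (N + 1), (if X i ω = 0 then (1 : ℝ) else 0) = 1 - (X i ω : ℝ) := by
        intro i
        rcases hbin i ω with h | h <;> simp [h]
      simp only [h, this, Finset.sum_sub_distrib, avg]
      simp
      field_simp
    · have : ∀ i : Fin (N + 1), (if X i ω = 1 then (1 : ℝ) else 0) = (X i ω : ℝ) := by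
        intro i
        rcases hbin i ω with h | h <;> simp [h]
      simp only [h, this, avg]
      simp
  have h2 : n - ∑ i, x i = ∑ i, (1 - x i) := by
    have : ∑ i, (1 - x i) + ∑ i, x i = n := by
      rw [← Finset.sum_add_distrib]
      trans ∑ i : Fin n, 1
      · refine Finset.sum_congr rfl fun i _ => ?_
        rcases hx i with h | h <;> simp [h]
      · simp
    omega
  rw [h2, ← Finset.prod_pow_eq_pow_sum, ← Finset.prod_pow_eq_pow_sum, ← Finset.prod_mul_distrib]
  simp_rw [← h1]
  rw [Finset.prod_div_distrib, Finset.prod_univ_sum]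
  simp only [Finset.prod_const, Finset.card_univ, Fintype.card_fin, Fintype.piFinset_univ]
  congr 1
  refine Finset.sum_congr rfl fun f _ => ?_
  rw [Finset.prod_ite_zero]
  simp [Set.indicator_apply]

lemma integral_avg (hmeas : ∀ i, Measurable (X i)) (hbin : ∀ i ω, X i ω = 0 ∨ X i ω = 1)
    (N n : ℕ) (x : Fin n → ℕ) (hx : ∀ i, x i = 0 ∨ x i = 1) :
    ∫ ω, avg X N ω ^ (∑ i, x i) * (1 - avg X N ω) ^ (n - ∑ i, x i) ∂ℙ
      = (∑ f : Fin n → Fin (N + 1), ℙ.real {ω | ∀ j, X (f j) ω = x j}) / ((N : ℝ) + 1) ^ n := by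
  simp_rw [avg_expand X hbin N n x hx]
  have hS : ∀ f : Fin n → Fin (N + 1), MeasurableSet {ω | ∀ j, X (f j) ω = x j} := by
    intro f
    have : {ω | ∀ j, X (f j) ω = x j} = ⋂ j, X (f j) ⁻¹' {x j} := by ext; simp
    rw [this]
    exact MeasurableSet.iInter fun j => hmeas _ (measurableSet_singleton _)
  rw [integral_div, integral_finsetSum]
  · congr 1
    refine Finset.sum_congr rfl fun f _ => ?_
    exact integral_indicator_one (hS f)
  · intro f _
    exact (integrable_const (1 : ℝ)).indicator (hS f)

lemma bound_avg (hmeas : ∀ i, Measurable (X i)) (hbin : ∀ i ω, X i ω = 0 ∨ X i ω = 1)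
    (hexch : ∀ (n : ℕ) (σ : Equiv.Perm (Fin n)),
      Measure.map (fun ω (i : Fin n) => X (σ i) ω) ℙ
        = Measure.map (fun ω (i : Fin n) => X i ω) ℙ)
    (N n : ℕ) (x : Fin n → ℕ) (hx : ∀ i, x i = 0 ∨ x i = 1) :
    |(∫ ω, avg X N ω ^ (∑ i, x i) * (1 - avg X N ω) ^ (n - ∑ i, x i) ∂ℙ)
      - ℙ.real {ω | ∀ i : Fin n, X i ω = x i}|
      ≤ 1 - ((N + 1).descFactorial n : ℝ) / ((N : ℝ) + 1) ^ n := by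
  classical
  rw [integral_avg ℙ X hmeas hbin N n x hx]
  set P := ℙ.real {ω | ∀ i : Fin n, X i ω = x i} with hP
  have hpos : (0 : ℝ) < ((N : ℝ) + 1) ^ n := by positivity
  have hcard : (Fintype.card (Fin n → Fin (N + 1)) : ℝ) = ((N : ℝ) + 1) ^ n := by simp
  have e1 : (∑ f : Fin n → Fin (N + 1), ℙ.real {ω | ∀ j, X (f j) ω = x j}) / ((N : ℝ) + 1) ^ n - P
      = (∑ f : Fin n → Fin (N + 1), (ℙ.real {ω | ∀ j, X (f j) ω = x j} - P))
        / ((N : ℝ) + 1) ^ n := by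
    rw [Finset.sum_sub_distrib, Finset.sum_const, nsmul_eq_mul, Finset.card_univ, hcard]
    field_simp
  have e2 : ∑ f : Fin n → Fin (N + 1), (if Function.Injective f then (1 : ℝ) else 0)
      = ((N + 1).descFactorial n : ℝ) := by
    rw [Finset.sum_boole, ← Fintype.card_subtype]
    rw [Fintype.card_congr (Equiv.subtypeInjectiveEquivEmbedding (Fin n) (Fin (N + 1)))]
    simp [Fintype.card_embedding_eq]
  rw [e1, abs_div, abs_of_pos hpos, div_le_iff₀ hpos, sub_mul, one_mul, div_mul_cancel₀ _ hpos.ne',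
    ← e2, ← hcard, ← Finset.card_univ]
  have e3 : ((Finset.univ : Finset (Fin n → Fin (N + 1))).card : ℝ)
      = ∑ f : Fin n → Fin (N + 1), (1 : ℝ) := by simp
  rw [e3, ← Finset.sum_sub_distrib]
  refine (Finset.abs_sum_le_sum_abs _ _).trans (Finset.sum_le_sum fun f _ => ?_)
  split_ifs with hf
  · have : ℙ.real {ω | ∀ j, X (f j) ω = x j} = P := by
      rw [hP, measureReal_def, measureReal_def, prob_injective ℙ X hmeas hexch f hf x]
    simp [this]
  · have a1 : ℙ.real {ω | ∀ j, X (f j) ω = x j} ≤ 1 := measureReal_le_one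
    have a2 : P ≤ 1 := measureReal_le_one
    have a3 : 0 ≤ ℙ.real {ω | ∀ j, X (f j) ω = x j} := measureReal_nonneg
    have a4 : 0 ≤ P := measureReal_nonneg
    rw [abs_le]; constructor <;> linarith

lemma tendsto_desc (n : ℕ) :
    Tendsto (fun N : ℕ => 1 - ((N + 1).descFactorial n : ℝ) / ((N : ℝ) + 1) ^ n) atTop (𝓝 0) := by
  have h := isEquivalent_descFactorial n
  rw [Asymptotics.isEquivalent_iff_tendsto_one] at h
  · have h2 := (h.comp (tendsto_add_atTop_nat 1)).const_sub 1
    simpa [Function.comp_def] using h2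
  · filter_upwards [eventually_gt_atTop 0] with N hN
    positivity

lemma tendsto_avg (hmeas : ∀ i, Measurable (X i)) (hbin : ∀ i ω, X i ω = 0 ∨ X i ω = 1)
    (hexch : ∀ (n : ℕ) (σ : Equiv.Perm (Fin n)),
      Measure.map (fun ω (i : Fin n) => X (σ i) ω) ℙ
        = Measure.map (fun ω (i : Fin n) => X i ω) ℙ)
    (n : ℕ) (x : Fin n → ℕ) (hx : ∀ i, x i = 0 ∨ x i = 1) :
    Tendsto (fun N => ∫ ω, avg X N ω ^ (∑ i, x i) * (1 - avg X N ω) ^ (n - ∑ i, x i) ∂ℙ) atTop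
      (𝓝 (ℙ.real {ω | ∀ i : Fin n, X i ω = x i})) := by
  rw [tendsto_iff_dist_tendsto_zero]
  refine squeeze_zero (fun _ => dist_nonneg) (fun N => ?_) (tendsto_desc n)
  rw [Real.dist_eq]
  exact bound_avg ℙ X hmeas hbin hexch N n x hx

lemma exists_measure (hmeas : ∀ i, Measurable (X i)) (hbin : ∀ i ω, X i ω = 0 ∨ X i ω = 1)
    (hexch : ∀ (n : ℕ) (σ : Equiv.Perm (Fin n)),
      Measure.map (fun ω (i : Fin n) => X (σ i) ω) ℙ
        = Measure.map (fun ω (i : Fin n) => X i ω) ℙ) :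
    ∃ μ : ProbabilityMeasure (Set.Icc (0 : ℝ) 1),
      ∀ (n : ℕ) (x : Fin n → ℕ), (∀ i, x i = 0 ∨ x i = 1) →
        ℙ.real {ω | ∀ i : Fin n, X i ω = x i}
          = ∫ p : Set.Icc (0 : ℝ) 1,
              (p : ℝ) ^ (∑ i, x i) * (1 - (p : ℝ)) ^ (n - ∑ i, x i)
                ∂(μ : Measure (Set.Icc (0 : ℝ) 1)) := by
  let A : ℕ → Ω → Set.Icc (0 : ℝ) 1 := fun N ω => ⟨avg X N ω, avg_mem X hbin N ω⟩
  have hA : ∀ N, Measurable (A N) := fun N => (measurable_avg X hmeas N).subtype_mk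
  let μs : ℕ → ProbabilityMeasure (Set.Icc (0 : ℝ) 1) := fun N =>
    ⟨ℙ.map (A N), Measure.isProbabilityMeasure_map (hA N).aemeasurable⟩
  obtain ⟨μ, -, hμ⟩ := isCompact_univ.ultrafilter_le_nhds ((hyperfilter ℕ).map μs) (by simp)
  have hμ' : Tendsto μs (hyperfilter ℕ) (𝓝 μ) := hμ
  refine ⟨μ, fun n x hx => ?_⟩
  rw [ProbabilityMeasure.tendsto_iff_forall_integral_tendsto] at hμ'
  let g : C(Set.Icc (0 : ℝ) 1, ℝ) :=
    ⟨fun p => (p : ℝ) ^ (∑ i, x i) * (1 - (p : ℝ)) ^ (n - ∑ i, x i), by fun_prop⟩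
  have h1 := hμ' (BoundedContinuousFunction.mkOfCompact g)
  have h2 := (tendsto_avg ℙ X hmeas hbin hexch n x hx).mono_left Nat.hyperfilter_le_atTop
  refine tendsto_nhds_unique h2 (h1.congr fun N => ?_)
  exact integral_map (hA N).aemeasurable g.continuous.aestronglyMeasurable

end

end DeFinettiAux


/-- **de Finetti's Theorem, distributional form.** For an infinite exchangeable sequence of
`{0,1}`-valued random variables there is a unique probability (mixing) measure `μ` on `[0,1]`
such that every finite-dimensional probability is the corresponding mixture of Bernoulli
product probabilities. -/
theorem deFinetti_distributional
    {Ω : Type*} [MeasurableSpace Ω] (ℙ : Measure Ω) [IsProbabilityMeasure ℙ]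
    (X : ℕ → Ω → ℕ)
    (hmeas : ∀ i, Measurable (X i))
    (hbin : ∀ i ω, X i ω = 0 ∨ X i ω = 1)
    (hexch : ∀ (n : ℕ) (σ : Equiv.Perm (Fin n)),
      Measure.map (fun ω (i : Fin n) => X (σ i) ω) ℙ
        = Measure.map (fun ω (i : Fin n) => X i ω) ℙ) :
    ∃! μ : Measure (Set.Icc (0 : ℝ) 1), IsProbabilityMeasure μ ∧
      ∀ (n : ℕ), 0 < n → ∀ x : Fin n → ℕ, (∀ i, x i = 0 ∨ x i = 1) →
        (ℙ {ω | ∀ i : Fin n, X i ω = x i}).toReal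
          = ∫ p : Set.Icc (0 : ℝ) 1,
              (p : ℝ) ^ (∑ i, x i) * (1 - (p : ℝ)) ^ (n - ∑ i, x i) ∂μ := by

  obtain ⟨μ, hμ⟩ := DeFinettiAux.exists_measure ℙ X hmeas hbin hexch
  refine ⟨μ, ⟨inferInstance, fun n _ x hx => hμ n x hx⟩, ?_⟩
  rintro ν ⟨hν, h⟩
  refine DeFinettiAux.measure_ext ν μ fun n => ?_
  rcases Nat.eq_zero_or_pos n with rfl | hn
  · simp
  · have h1 := h n hn (fun _ => 1) (by simp)
    have h2 := hμ n (fun _ => 1) (by simp)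
    rw [measureReal_def] at h2
    rw [h1] at h2
    simpa using h2
end

section
/- Let S be a standard Borel space and let X_1, X_2, ... be an infinite sequence of S-valued exchangeable random variables. Then there exists a probability measure μ on the space P(S) of Borel probability measures on S such that for every positive integer n and all measurable sets A_1, ..., A_n ⊆ S, Pr(X_1 ∈ A_1, ..., X_n ∈ A_n) = ∫_{P(S)} π(A_1) · ... · π(A_n) dμ(π). Furthermore, the mixing measure μ is uniquely determined. -/
open MeasureTheory



theorem hs_law {Ω : Type*} [MeasurableSpace Ω] (ℙ : Measure Ω) [IsProbabilityMeasure ℙ]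
    {S : Type*} [MeasurableSpace S] (X : ℕ → Ω → S)
    (hmeas : ∀ i, Measurable (X i))
    (hexch : ∀ (n : ℕ) (σ : Equiv.Perm (Fin n)),
      Measure.map (fun ω (i : Fin n) => X (σ i) ω) ℙ
        = Measure.map (fun ω (i : Fin n) => X i ω) ℙ)
    (τ : ℕ → ℕ) (hτ : Function.Injective τ) :
    Measure.map (fun ω i => X (τ i) ω) ℙ = Measure.map (fun ω i => X i ω) ℙ := by
  refine (ProbabilityTheory.map_eq_iff_forall_finset_map_restrict_eq (X := fun i => X (τ i)) (Y := X)
    (measurable_pi_lambda _ fun i => hmeas _).aemeasurable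
    (measurable_pi_lambda _ fun i => hmeas _).aemeasurable).2 fun I => ?_
  obtain ⟨N, hN⟩ : ∃ N, ∀ i ∈ I, i < N ∧ τ i < N := by
    refine ⟨I.sup (fun i => i + τ i) + 1, fun i hi => ?_⟩
    have := Finset.le_sup (f := fun i => i + τ i) hi
    omega
  obtain ⟨σ, hσ⟩ := Equiv.Perm.exists_extending_pair (β := Fin N)
    (fun i : I => ⟨i.1, (hN i.1 i.2).1⟩) (fun i : I => ⟨τ i.1, (hN i.1 i.2).2⟩)
    (fun a b h => Subtype.ext (congrArg Fin.val h))
    (fun a b h => by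
      exact Subtype.ext (hτ (congrArg Fin.val h)))
  have h := congrArg (Measure.map (fun (y : Fin N → S) (i : I) => y ⟨i.1, (hN i.1 i.2).1⟩))
    (hexch N σ)
  rw [Measure.map_map (by fun_prop) (by fun_prop), Measure.map_map (by fun_prop) (by fun_prop)] at h
  have e : (fun ω => I.restrict (fun i => X (τ i) ω))
      = (fun (y : Fin N → S) (i : I) => y ⟨i.1, (hN i.1 i.2).1⟩) ∘
        fun ω (i : Fin N) => X (σ i) ω := by
    ext ω i
    simp [hσ]
  rw [e, h]
  rfl

theorem hs_exists
    {Ω : Type*} [MeasurableSpace Ω] (ℙ : Measure Ω) [IsProbabilityMeasure ℙ]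
    {S : Type*} [MeasurableSpace S] [StandardBorelSpace S]
    (X : ℕ → Ω → S)
    (hmeas : ∀ i, Measurable (X i))
    (hexch : ∀ (n : ℕ) (σ : Equiv.Perm (Fin n)),
      Measure.map (fun ω (i : Fin n) => X (σ i) ω) ℙ
        = Measure.map (fun ω (i : Fin n) => X i ω) ℙ) :
    ∃ μ : Measure (Measure S), IsProbabilityMeasure μ ∧
      (∀ᵐ π ∂μ, IsProbabilityMeasure π) ∧
      ∀ (n : ℕ), 0 < n → ∀ A : Fin n → Set S, (∀ i, MeasurableSet (A i)) →
        ℙ {ω | ∀ i : Fin n, X i ω ∈ A i} = ∫⁻ π, ∏ i, π (A i) ∂μ := by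
  obtain ⟨ω₀⟩ : Nonempty Ω := nonempty_of_isProbabilityMeasure ℙ
  have : Nonempty S := ⟨X 0 ω₀⟩
  have hlaw := hs_law ℙ X hmeas hexch
  let Y : ℕ → Ω → (ℕ → S) := fun m ω i => X (m + i) ω
  have hY : ∀ m, Measurable (Y m) := fun m => measurable_pi_lambda _ fun i => hmeas _
  have hYlaw : ∀ m, Measure.map (Y m) ℙ = Measure.map (fun ω i => X i ω) ℙ := fun m =>
    hlaw (fun i => m + i) (add_right_injective m)
  set ν := Measure.map (fun ω i => X i ω) ℙ with hν
  have : IsProbabilityMeasure ν :=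
    Measure.isProbabilityMeasure_map (measurable_pi_lambda _ fun i => hmeas _).aemeasurable
  let κ := ProbabilityTheory.condDistrib (X 0) (Y 1) ℙ
  have hκ : ν.compProd κ = Measure.map (fun ω => (Y 1 ω, X 0 ω)) ℙ := by
    rw [← hYlaw 1]
    exact ProbabilityTheory.compProd_map_condDistrib (hmeas 0).aemeasurable
  -- the pair law
  have hpair : ∀ k m, k < m → Measure.map (fun ω => (Y m ω, X k ω)) ℙ = ν.compProd κ := by
    intro k m hkm
    rw [hκ]
    have key : ∀ k m, k < m → Measure.map (fun ω => (Y m ω, X k ω)) ℙ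
        = Measure.map (fun y : ℕ → S => ((fun i => y (i+1)), y 0)) ν := by
      intro k m hkm
      rw [← hlaw (fun i => if i = 0 then k else m + (i-1)) ?_, Measure.map_map ?_ ?_]
      · rfl
      · refine Measurable.prodMk (measurable_pi_lambda _ fun i => measurable_pi_apply _)
          (measurable_pi_apply _)
      · exact measurable_pi_lambda _ fun i => hmeas _
      · intro a b hab
        simp only at hab
        split_ifs at hab <;> omega
    rw [key k m hkm, key 0 1 one_pos]
  have hdis : ∀ k m, k < m → ∀ A, MeasurableSet A → ∀ G : (ℕ → S) → ENNReal, Measurable G →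
      ∫⁻ ω, A.indicator 1 (X k ω) * G (Y m ω) ∂ℙ = ∫⁻ ω, κ (Y m ω) A * G (Y m ω) ∂ℙ := by
    intro k m hkm A hA G hG
    have hm1 : Measurable (fun p : (ℕ → S) × S => A.indicator (1 : S → ENNReal) p.2 * G p.1) :=
      ((measurable_one.indicator hA).comp measurable_snd).mul (hG.comp measurable_fst)
    have h1 := lintegral_map (μ := ℙ) hm1 ((hY m).prodMk (hmeas k))
    rw [hpair k m hkm, Measure.lintegral_compProd hm1] at h1
    rw [← h1]
    have hm2 : Measurable (fun y => κ y A * G y) := (κ.measurable_coe hA).mul hG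
    rw [← lintegral_map hm2 (hY m), hYlaw m]
    refine lintegral_congr fun y => ?_
    simp only
    rw [lintegral_mul_const _ (measurable_one.indicator hA), lintegral_indicator_one hA]
  -- invariance
  have hinv : ∀ A, MeasurableSet A → ∀ m, 1 ≤ m → ∀ᵐ ω ∂ℙ, κ (Y m ω) A = κ (Y 1 ω) A := by
    intro A hA m hm
    have hφ : Measurable (fun y => κ y A) := κ.measurable_coe hA
    have e1 := hdis 0 1 one_pos A hA (fun y => κ (fun i => y (m - 1 + i)) A)
      (hφ.comp (measurable_pi_lambda _ fun i => measurable_pi_apply _))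
    have e0 : ∀ ω, (fun i => Y 1 ω (m - 1 + i)) = Y m ω := by
      intro ω; ext i; simp only [Y]; congr 1; omega
    simp only [e0] at e1
    rw [hdis 0 m (by omega) A hA (fun y => κ y A) hφ] at e1
    have e2 : ∫⁻ ω, κ (Y m ω) A * κ (Y m ω) A ∂ℙ = ∫⁻ ω, κ (Y 1 ω) A * κ (Y 1 ω) A ∂ℙ := by
      rw [← lintegral_map (f := fun y => κ y A * κ y A) (hφ.mul hφ) (hY m),
        ← lintegral_map (f := fun y => κ y A * κ y A) (hφ.mul hφ) (hY 1), hYlaw, hYlaw]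
    let f : ℕ → Ω → ℝ := fun j ω => (κ (Y j ω)).real A
    have hfm : ∀ j, Measurable (f j) := fun j => (hφ.comp (hY j)).ennreal_toReal
    have hf : ∀ i j, ∫ ω, f i ω * f j ω ∂ℙ = (∫⁻ ω, κ (Y i ω) A * κ (Y j ω) A ∂ℙ).toReal := by
      intro i j
      rw [← integral_toReal]
      · simp [f, Measure.real]
      · exact ((hφ.comp (hY i)).mul (hφ.comp (hY j))).aemeasurable
      · exact ae_of_all _ fun ω => ENNReal.mul_lt_top (measure_lt_top _ _) (measure_lt_top _ _)
    have hint : ∀ i j, Integrable (fun ω => f i ω * f j ω) ℙ := by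
      intro i j
      refine Integrable.of_bound ((hfm i).mul (hfm j)).aestronglyMeasurable 1 (ae_of_all _ fun ω => ?_)
      have a1 : 0 ≤ f i ω := measureReal_nonneg
      have a2 : 0 ≤ f j ω := measureReal_nonneg
      have b1 : f i ω ≤ 1 := measureReal_le_one
      have b2 : f j ω ≤ 1 := measureReal_le_one
      rw [Real.norm_of_nonneg (by positivity)]
      exact mul_le_one₀ b1 a2 b2
    have hz : ∫ ω, (f m ω - f 1 ω)^2 ∂ℙ = 0 := by
      have : ∀ ω, (f m ω - f 1 ω)^2 = f m ω * f m ω - (f 1 ω * f m ω + f 1 ω * f m ω) + f 1 ω * f 1 ω :=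
        fun ω => by ring
      simp_rw [this]
      rw [integral_add, integral_sub, integral_add, hf, hf, hf, ← e1, e2]
      · ring
      all_goals first
        | exact hint _ _
        | exact (hint _ _).add (hint _ _)
        | exact (hint _ _).sub ((hint _ _).add (hint _ _))
    rw [integral_eq_zero_iff_of_nonneg (fun ω => sq_nonneg _)] at hz
    · filter_upwards [hz] with ω hω
      have h0 : f m ω = f 1 ω := by
        have : (f m ω - f 1 ω)^2 = 0 := hω
        exact sub_eq_zero.1 (pow_eq_zero_iff two_ne_zero |>.1 this)
      exact (ENNReal.toReal_eq_toReal_iff' (measure_ne_top _ _) (measure_ne_top _ _)).1 h0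
    · refine Integrable.of_bound (((hfm m).sub (hfm 1)).pow_const 2).aestronglyMeasurable 1
        (ae_of_all _ fun ω => ?_)
      have a1 : 0 ≤ f m ω := measureReal_nonneg
      have a2 : 0 ≤ f 1 ω := measureReal_nonneg
      have b1 : f m ω ≤ 1 := measureReal_le_one
      have b2 : f 1 ω ≤ 1 := measureReal_le_one
      rw [Real.norm_of_nonneg (by positivity)]
      nlinarith
  -- main induction
  have main : ∀ (A : ℕ → Set S), (∀ i, MeasurableSet (A i)) → ∀ n, 
      ∀ G : (ℕ → S) → ENNReal, Measurable G →
      ∫⁻ ω, (∏ i ∈ Finset.range n, (A i).indicator 1 (X i ω)) * G (Y n ω) ∂ℙ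
        = ∫⁻ ω, (∏ i ∈ Finset.range n, κ (Y n ω) (A i)) * G (Y n ω) ∂ℙ := by
    intro A hA n
    induction n with
    | zero => intro G hG; simp
    | succ n ih =>
      intro G hG
      have hshift : ∀ ω, (fun i => Y n ω (i + 1)) = Y (n+1) ω := by
        intro ω; ext i; simp only [Y]; congr 1; omega
      have hm : Measurable (fun y : ℕ → S => (A n).indicator (1 : S → ENNReal) (y 0)
          * G (fun i => y (i+1))) :=
        ((measurable_one.indicator (hA n)).comp (measurable_pi_apply 0)).mul
          (hG.comp (measurable_pi_lambda _ fun i => measurable_pi_apply _))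
      have h1 := ih _ hm
      have hX0 : ∀ ω, Y n ω 0 = X n ω := fun ω => rfl
      simp only [hshift, hX0] at h1
      simp only [Finset.prod_range_succ, mul_assoc]
      rw [h1]
      have hae : ∀ᵐ ω ∂ℙ, ∀ i ∈ Finset.range n, κ (Y n ω) (A i) = κ (Y (n+1) ω) (A i) := by
        rcases Nat.eq_zero_or_pos n with rfl | hn
        · simp
        · have : ∀ i, ∀ᵐ ω ∂ℙ, κ (Y n ω) (A i) = κ (Y (n+1) ω) (A i) := by
            intro i
            filter_upwards [hinv (A i) (hA i) n hn, hinv (A i) (hA i) (n+1) (by omega)] with ω h h'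
            rw [h, h']
          filter_upwards [ae_all_iff.2 this] with ω hω i _ using hω i
      have h2 := hdis n (n+1) (by omega) (A n) (hA n)
        (fun y => (∏ i ∈ Finset.range n, κ y (A i)) * G y)
        ((Finset.measurable_prod _ fun i _ => κ.measurable_coe (hA i)).mul hG)
      calc _ = ∫⁻ ω, (A n).indicator 1 (X n ω) *
            ((∏ i ∈ Finset.range n, κ (Y (n+1) ω) (A i)) * G (Y (n+1) ω)) ∂ℙ := by
            refine lintegral_congr_ae ?_
            filter_upwards [hae] with ω hω
            rw [Finset.prod_congr rfl hω]
            ring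
        _ = _ := by
            rw [h2]
            refine lintegral_congr fun ω => ?_
            ring
  refine ⟨ν.map κ, Measure.isProbabilityMeasure_map κ.measurable.aemeasurable, ?_, ?_⟩
  · have : ∀ᵐ π ∂(ν.map κ), π Set.univ = 1 := by
      refine (ae_map_iff (p := fun π : Measure S => π Set.univ = 1) κ.measurable.aemeasurable
        ((Measure.measurable_coe MeasurableSet.univ) (measurableSet_singleton 1))).2 ?_
      exact ae_of_all _ fun y => measure_univ
    filter_upwards [this] with π hπ using ⟨hπ⟩
  · intro n _ A hA
    let B : ℕ → Set S := fun i => if h : i < n then A ⟨i, h⟩ else Set.univ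
    have hB : ∀ i, MeasurableSet (B i) := by
      intro i; simp only [B]; split_ifs
      · exact hA _
      · exact MeasurableSet.univ
    have hBA : ∀ i : Fin n, B i = A i := fun i => by simp [B]
    have h := main B hB n (fun _ => 1) measurable_const
    simp only [mul_one] at h
    rw [lintegral_map (Finset.measurable_prod _ fun i _ => Measure.measurable_coe (hA i))
      κ.measurable, ← hYlaw n, lintegral_map (Finset.measurable_prod _ fun i _ =>
        κ.measurable_coe (hA i)) (hY n)]
    simp only [Finset.prod_range, hBA] at h
    rw [← h, ← lintegral_indicator_one]
    · refine lintegral_congr fun ω => ?_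
      by_cases hω : ∀ i : Fin n, X i ω ∈ A i
      · simp [Set.indicator, hω]
      · rw [Set.indicator_of_notMem (by simpa using hω)]
        push Not at hω
        obtain ⟨i, hi⟩ := hω
        exact (Finset.prod_eq_zero (Finset.mem_univ i) (by simp [hi])).symm
    · have : {ω | ∀ i : Fin n, X i ω ∈ A i} = ⋂ i : Fin n, X i ⁻¹' A i := by ext; simp
      rw [this]
      exact MeasurableSet.iInter fun i => hmeas _ (hA i)

theorem hs_moment {ι : Type*} [Fintype ι] (P P' : Measure (ι → unitInterval))
    [IsProbabilityMeasure P] [IsProbabilityMeasure P']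
    (h : ∀ l : List ι, ∫ x, (l.map fun i => (x i : ℝ)).prod ∂P
      = ∫ x, (l.map fun i => (x i : ℝ)).prod ∂P') : P = P' := by
  let c : ι → BoundedContinuousFunction (ι → unitInterval) ℝ := fun i =>
    BoundedContinuousFunction.mkOfCompact ⟨fun x => (x i : ℝ), by fun_prop⟩
  let A : StarSubalgebra ℝ (BoundedContinuousFunction (ι → unitInterval) ℝ) :=
    { Algebra.adjoin ℝ (Set.range c) with
      star_mem' := fun {a} ha => by
        have : star a = a := by ext x; simp
        rw [this]; exact ha }
  refine ext_of_forall_mem_subalgebra_integral_eq_of_pseudoEMetric_complete_countable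
    (𝕜 := ℝ) (A := A) ?_ ?_
  · intro x y hxy
    obtain ⟨i, hi⟩ := Function.ne_iff.1 hxy
    refine ⟨fun z => (z i : ℝ), ⟨BoundedContinuousFunction.toContinuousMapStarₐ ℝ (c i),
      ⟨c i, Algebra.subset_adjoin ⟨i, rfl⟩, rfl⟩, rfl⟩, ?_⟩
    simpa [Subtype.ext_iff] using hi
  · intro g hg
    have hg' : g ∈ Subalgebra.toSubmodule (Algebra.adjoin ℝ (Set.range c)) := hg
    rw [Algebra.adjoin_eq_span] at hg'
    induction hg' using Submodule.span_induction with
    | mem g hgc =>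
      clear hg
      have : ∃ l : List ι, ∀ x, g x = (l.map fun i => (x i : ℝ)).prod := by
        induction hgc using Submonoid.closure_induction with
        | mem g hg => 
          obtain ⟨i, rfl⟩ := hg
          exact ⟨[i], fun x => by simp [c]⟩
        | one => exact ⟨[], fun x => by simp⟩
        | mul a b _ _ ha hb =>
          obtain ⟨l, hl⟩ := ha
          obtain ⟨l', hl'⟩ := hb
          exact ⟨l ++ l', fun x => by simp [hl, hl']⟩
      obtain ⟨l, hl⟩ := this
      simp only [hl]
      exact h l
    | zero => simp
    | add a b ha hb iha ihb =>
      have m : ∀ a, a ∈ Submodule.span ℝ (Submonoid.closure (Set.range c) : Set _) → a ∈ A := by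
        intro a ha
        rw [← Algebra.adjoin_eq_span] at ha
        exact ha
      have e1 := integral_add (a.integrable P) (b.integrable P)
      have e2 := integral_add (a.integrable P') (b.integrable P')
      simp only [BoundedContinuousFunction.coe_add, Pi.add_apply]
      rw [e1, e2, iha (m a ha), ihb (m b hb)]
    | smul r a ha iha =>
      have m : ∀ a, a ∈ Submodule.span ℝ (Submonoid.closure (Set.range c) : Set _) → a ∈ A := by
        intro a ha
        rw [← Algebra.adjoin_eq_span] at ha
        exact ha
      simp only [BoundedContinuousFunction.coe_smul, smul_eq_mul, integral_const_mul]
      rw [iha (m a ha)]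

theorem hs_unique {S : Type*} [MeasurableSpace S] (μ μ' : Measure (Measure S))
    [IsProbabilityMeasure μ] [IsProbabilityMeasure μ']
    (hμ : ∀ᵐ π ∂μ, IsProbabilityMeasure π) (hμ' : ∀ᵐ π ∂μ', IsProbabilityMeasure π)
    (h : ∀ (n : ℕ), 0 < n → ∀ A : Fin n → Set S, (∀ i, MeasurableSet (A i)) →
      ∫⁻ π, ∏ i, π (A i) ∂μ = ∫⁻ π, ∏ i, π (A i) ∂μ') : μ = μ' := by
  let ψ : Measure S → {A : Set S // MeasurableSet A} → unitInterval :=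
    fun π A => Set.projIcc 0 1 zero_le_one (π.real A.1)
  have hψ : Measurable ψ := measurable_pi_lambda _ fun A =>
    continuous_projIcc.measurable.comp (Measure.measurable_coe A.2).ennreal_toReal
  have hψv : ∀ π : Measure S, IsProbabilityMeasure π → ∀ A, (ψ π A : ℝ) = (π A.1).toReal := by
    intro π hπ A
    simp only [ψ]
    rw [Set.projIcc_of_mem zero_le_one ⟨measureReal_nonneg, measureReal_le_one⟩]
    rfl
  -- list moments
  have hmom : ∀ (ρ : Measure (Measure S)) [IsProbabilityMeasure ρ],
      (∀ᵐ π ∂ρ, IsProbabilityMeasure π) → ∀ l : List {A : Set S // MeasurableSet A},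
      ∫ π, (l.map fun A => (ψ π A : ℝ)).prod ∂ρ
        = (∫⁻ π, ∏ i : Fin l.length, π (l.get i).1 ∂ρ).toReal := by
    intro ρ _ hρ l
    rw [← integral_toReal]
    · refine integral_congr_ae ?_
      filter_upwards [hρ] with π hπ
      rw [ENNReal.toReal_prod, ← List.prod_ofFn]
      congr 1
      refine List.ext_get (by simp) fun n h1 h2 => ?_
      simp [hψv π hπ]
    · exact (Finset.measurable_prod _ fun i _ => Measure.measurable_coe (l.get i).2).aemeasurable
    · filter_upwards [hρ] with π hπ
      exact ENNReal.prod_lt_top fun i _ => measure_lt_top _ _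
  have hmom' : ∀ l : List {A : Set S // MeasurableSet A},
      ∫ π, (l.map fun A => (ψ π A : ℝ)).prod ∂μ = ∫ π, (l.map fun A => (ψ π A : ℝ)).prod ∂μ' := by
    intro l
    rw [hmom μ hμ, hmom μ' hμ']
    rcases Nat.eq_zero_or_pos l.length with h0 | h0
    · have : l = [] := List.length_eq_zero_iff.1 h0
      subst this
      simp
    · rw [h _ h0 _ fun i => (l.get i).2]
  have hlaw : μ.map ψ = μ'.map ψ := by
    have hr : ∀ I : Finset {A : Set S // MeasurableSet A}, Measurable (I.restrict ∘ ψ) := fun I =>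
      (Finset.measurable_restrict I).comp hψ
    have hfin : ∀ I : Finset {A : Set S // MeasurableSet A},
        (μ.map ψ).map I.restrict = (μ'.map ψ).map I.restrict := by
      intro I
      rw [Measure.map_map (Finset.measurable_restrict I) hψ,
        Measure.map_map (Finset.measurable_restrict I) hψ]
      have : IsProbabilityMeasure (μ.map (I.restrict ∘ ψ)) :=
        Measure.isProbabilityMeasure_map (hr I).aemeasurable
      have : IsProbabilityMeasure (μ'.map (I.restrict ∘ ψ)) :=
        Measure.isProbabilityMeasure_map (hr I).aemeasurable
      refine hs_moment _ _ fun l => ?_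
      have hc : Continuous (fun x : I → unitInterval => (l.map fun i => (x i : ℝ)).prod) := by
        refine continuous_list_prod l fun i _ => by fun_prop
      rw [integral_map (hr I).aemeasurable hc.aestronglyMeasurable,
        integral_map (hr I).aemeasurable hc.aestronglyMeasurable]
      simpa [Function.comp_def] using hmom' (l.map Subtype.val)
    have h1 : IsProjectiveLimit (μ.map ψ) (fun I => (μ.map ψ).map I.restrict) := fun I => rfl
    have h2 : IsProjectiveLimit (μ'.map ψ) (fun I => (μ.map ψ).map I.restrict) :=
      fun I => (hfin I).symm
    have : IsProbabilityMeasure (μ.map ψ) := Measure.isProbabilityMeasure_map hψ.aemeasurable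
    have : ∀ I : Finset {A : Set S // MeasurableSet A},
      IsFiniteMeasure ((μ.map ψ).map I.restrict) := fun I => inferInstance
    exact h1.unique h2
  let Φ : Measure S → {A : Set S // MeasurableSet A} → ENNReal := fun π A => π A.1
  let T : ({A : Set S // MeasurableSet A} → unitInterval) →
    {A : Set S // MeasurableSet A} → ENNReal := fun x A => ENNReal.ofReal (x A)
  have hT : Measurable T := by fun_prop
  have hΦT : ∀ π : Measure S, IsProbabilityMeasure π → T (ψ π) = Φ π := by
    intro π hπ
    ext A
    simp only [T, Φ, hψv π hπ]
    exact ENNReal.ofReal_toReal (measure_ne_top _ _)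
  have hcomap : (Measure.instMeasurableSpace : MeasurableSpace (Measure S))
      = MeasurableSpace.comap Φ MeasurableSpace.pi := by
    simp only [Measure.instMeasurableSpace, MeasurableSpace.pi, MeasurableSpace.comap_iSup,
      MeasurableSpace.comap_comp, iSup_subtype]
    rfl
  ext B hB
  rw [hcomap] at hB
  obtain ⟨C, hC, rfl⟩ := hB
  have hρ : ∀ (ρ : Measure (Measure S)), (∀ᵐ π ∂ρ, IsProbabilityMeasure π) →
      ρ (Φ ⁻¹' C) = ρ.map ψ (T ⁻¹' C) := by
    intro ρ hρ
    rw [Measure.map_apply hψ (hT hC)]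
    refine measure_congr ?_
    filter_upwards [hρ] with π hπ
    change (Φ π ∈ C) = (T (ψ π) ∈ C)
    rw [hΦT π hπ]
  rw [hρ μ hμ, hρ μ' hμ', hlaw]

/-- **Hewitt–Savage theorem.** An infinite exchangeable sequence with values in a standard
Borel space `S` is a unique mixture of i.i.d. sequences: there is a unique probability
measure `μ` on the space of (probability) measures on `S` (with the σ-algebra generated by
the evaluation maps) reproducing all finite-dimensional distributions as mixtures of
product probabilities. -/
theorem hewitt_savage
    {Ω : Type*} [MeasurableSpace Ω] (ℙ : Measure Ω) [IsProbabilityMeasure ℙ]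
    {S : Type*} [MeasurableSpace S] [StandardBorelSpace S]
    (X : ℕ → Ω → S)
    (hmeas : ∀ i, Measurable (X i))
    (hexch : ∀ (n : ℕ) (σ : Equiv.Perm (Fin n)),
      Measure.map (fun ω (i : Fin n) => X (σ i) ω) ℙ
        = Measure.map (fun ω (i : Fin n) => X i ω) ℙ) :
    ∃! μ : Measure (Measure S), IsProbabilityMeasure μ ∧
      (∀ᵐ π ∂μ, IsProbabilityMeasure π) ∧
      ∀ (n : ℕ), 0 < n → ∀ A : Fin n → Set S, (∀ i, MeasurableSet (A i)) →
        ℙ {ω | ∀ i : Fin n, X i ω ∈ A i} = ∫⁻ π, ∏ i, π (A i) ∂μ := by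
  obtain ⟨μ, h1, h2, h3⟩ := hs_exists ℙ X hmeas hexch
  refine ⟨μ, ⟨h1, h2, h3⟩, ?_⟩
  rintro μ' ⟨g1, g2, g3⟩
  exact hs_unique μ' μ g2 h2 fun n hn A hA => by rw [← g3 n hn A hA, ← h3 n hn A hA]
end

section
/- Let X_1, ..., X_k, X_{k+1}, ..., X_n be an exchangeable sequence of random variables taking values in a measurable space S. Then there exists a mixture of i.i.d. laws (a probability law on S^k of the form ∫ π^{⊗k} dμ(π) for some probability measure μ on probability measures π on S) whose total variation distance from the distribution of (X_1, ..., X_k) is at most 2|S|k/n if S is finite, and at most k(k−1)/n for general S. -/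
open MeasureTheory

lemma df_A {ι : Type*} [DecidableEq ι] (n c : ℝ) (hn : 0 < n) (v : ι → ℝ) (m : ℕ) :
    ∀ (I : Finset ι), I.card = m → (m : ℝ) ≤ n + c → (∀ i ∈ I, 0 ≤ v i) → (∀ i ∈ I, v i ≤ 1) →
    (∀ t : ℝ, 0 ≤ t → ((I.filter (fun i => v i ≤ t)).card : ℝ) ≤ t * n + c) →
    ∏ i ∈ I, (1 - v i) ≤ ∏ l ∈ Finset.range m, (1 - ((l : ℝ) + 1 - c) / n) := by
  induction m with
  | zero =>
    intro I hI _ _ _ _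
    rw [Finset.card_eq_zero] at hI
    simp [hI]
  | succ m ih =>
    intro I hI hm h0 h1 ht
    have hne : I.Nonempty := by
      rw [← Finset.card_pos]; omega
    obtain ⟨i, hi, hmax⟩ := Finset.exists_max_image I v hne
    have hcard : (I.erase i).card = m := by
      rw [Finset.card_erase_of_mem hi]; omega
    have hm' : (m : ℝ) ≤ n + c := by push_cast at hm; linarith
    have h := ih (I.erase i) hcard hm' (fun j hj => h0 j (Finset.mem_of_mem_erase hj))
      (fun j hj => h1 j (Finset.mem_of_mem_erase hj)) (fun t h0t => by
        refine le_trans ?_ (ht t h0t)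
        exact_mod_cast Finset.card_le_card (Finset.filter_subset_filter _ (Finset.erase_subset _ _)))
    have h2 := ht (v i) (h0 i hi)
    rw [Finset.filter_true_of_mem hmax, hI] at h2
    push_cast at h2
    rw [← Finset.prod_erase_mul I _ hi, Finset.prod_range_succ]
    have h3 : 1 - v i ≤ 1 - ((m : ℝ) + 1 - c) / n := by
      have : ((m : ℝ) + 1 - c) / n ≤ v i := by
        rw [div_le_iff₀ hn]; linarith
      linarith
    have h4 : 0 ≤ 1 - v i := by linarith [h1 i hi]
    have h5 : 0 ≤ ∏ l ∈ Finset.range m, (1 - ((l : ℝ) + 1 - c) / n) := by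
      apply le_trans _ h
      apply Finset.prod_nonneg
      intro j hj
      linarith [h1 j (Finset.mem_of_mem_erase hj)]
    exact mul_le_mul h h3 h4 h5

lemma df_bern (a : ℝ) (ha : 0 ≤ a) (c : ℕ) : a ^ c * (a + c) ≤ (a + 1) ^ (c + 1) := by
  induction c with
  | zero => simp
  | succ c ih =>
    have h1 : a ^ c * a ≤ (a + 1) ^ c * (a + 1) := by
      rw [← pow_succ, ← pow_succ]; gcongr; linarith
    have h2 : a ^ c * a * a ≤ a ^ c * a * (a + 1) := by
      apply mul_le_mul_of_nonneg_left (by linarith); positivity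
    have h3 : a * (a ^ c * (a + c)) ≤ a * (a + 1) ^ (c + 1) := by gcongr
    rw [pow_succ (a + 1) (c + 1)]
    push_cast
    have : a ^ (c + 1) * (a + (c + 1)) = a * (a ^ c * (a + c)) + a ^ c * a := by ring
    rw [this]
    have h4 : (a + 1) ^ (c + 1) = (a + 1) ^ c * (a + 1) := by ring
    linarith

lemma df_B (n c : ℕ) (hn : 0 < n) (k : ℕ) (hk : k ≤ n) :
    (1 - (k : ℝ) / n) ^ c * ∏ l ∈ Finset.range k, (1 - ((l : ℝ) + 1 - c) / n)
      ≤ ∏ l ∈ Finset.range k, (1 - (l : ℝ) / n) := by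
  have hn' : (0 : ℝ) < n := by exact_mod_cast hn
  induction k with
  | zero => simp
  | succ k ih =>
    have h := ih (by omega)
    rw [Finset.prod_range_succ, Finset.prod_range_succ]
    have hkn : (k : ℝ) + 1 ≤ n := by exact_mod_cast hk
    set B := ∏ l ∈ Finset.range k, (1 - ((l : ℝ) + 1 - c) / n) with hB
    have hB0 : 0 ≤ B := by
      apply Finset.prod_nonneg
      intro l hl
      have hl' : (l : ℝ) + 1 ≤ k := by exact_mod_cast Finset.mem_range.1 hl
      rw [sub_nonneg, div_le_one hn']
      have : (0 : ℝ) ≤ c := by positivity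
      linarith
    have hk1 : 0 ≤ 1 - (k : ℝ) / n := by
      rw [sub_nonneg, div_le_one hn']; linarith
    have key : (1 - ((k + 1 : ℕ) : ℝ) / n) ^ c * (1 - ((k : ℝ) + 1 - c) / n)
        ≤ (1 - (k : ℝ) / n) ^ (c + 1) := by
      have e1 : 1 - ((k + 1 : ℕ) : ℝ) / n = (n - k - 1) / n := by push_cast; field_simp; ring
      have e2 : 1 - ((k : ℝ) + 1 - c) / n = ((n - k - 1) + c) / n := by field_simp; ring
      have e3 : 1 - (k : ℝ) / n = ((n - k - 1) + 1) / n := by field_simp; ring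
      rw [e1, e2, e3, div_pow, div_pow, div_mul_div_comm, ← pow_succ]
      gcongr
      exact df_bern _ (by linarith) c
    calc _ = ((1 - ((k + 1 : ℕ) : ℝ) / n) ^ c * (1 - ((k : ℝ) + 1 - c) / n)) * B := by ring
      _ ≤ (1 - (k : ℝ) / n) ^ (c + 1) * B := by gcongr
      _ = ((1 - (k : ℝ) / n) ^ c * B) * (1 - (k : ℝ) / n) := by ring
      _ ≤ _ := by gcongr

lemma df_desc (n k : ℕ) (hn : 0 < n) :
    k ≤ n → (n.descFactorial k : ℝ) = n ^ k * ∏ l ∈ Finset.range k, (1 - (l : ℝ) / n) := by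
  have hn' : (0 : ℝ) < n := by exact_mod_cast hn
  induction k with
  | zero => simp
  | succ k ih =>
    intro hk
    rw [Nat.descFactorial_succ, Finset.prod_range_succ, pow_succ]
    push_cast [Nat.cast_sub (show k ≤ n by omega)]
    rw [ih (by omega)]
    field_simp

/-- elementary birthday bound -/
lemma df_birthday (n k : ℕ) (hn : 0 < n) (hk : k ≤ n) :
    1 - (k * (k - 1) : ℝ) / (2 * n) ≤ ∏ l ∈ Finset.range k, (1 - (l : ℝ) / n) := by
  have hn' : (0 : ℝ) < n := by exact_mod_cast hn
  induction k with
  | zero => simp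
  | succ k ih =>
    have h := ih (by omega)
    rw [Finset.prod_range_succ]
    have hkn : (k : ℝ) + 1 ≤ n := by exact_mod_cast hk
    have hk1 : 0 ≤ 1 - (k : ℝ) / n := by
      rw [sub_nonneg, div_le_one hn']; linarith
    have hk0 : 0 ≤ (k : ℝ) / n := by positivity
    refine le_trans ?_ (mul_le_mul_of_nonneg_right h hk1)
    have hkk : 0 ≤ (k * (k - 1) : ℝ) / (2 * n) := by
      apply div_nonneg _ (by positivity)
      rcases k with _ | k
      · simp
      · push_cast; have : (0 : ℝ) ≤ k := by positivity
        nlinarith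
    have : ((k + 1 : ℕ) * ((k + 1 : ℕ) - 1) : ℝ) / (2 * n) = (k * (k - 1) : ℝ) / (2 * n) + k / n := by
      push_cast; field_simp; ring
    rw [this]
    nlinarith [mul_nonneg hkk hk0]

section count
open Classical

/-- number of earlier occurrences -/
noncomputable def dfJ {S : Type*} (y : ℕ → S) (i : ℕ) : ℕ :=
  ((Finset.range i).filter (fun j => y j = y i)).card

noncomputable def dfN {S : Type*} {n : ℕ} (x : Fin n → S) (s : S) : ℕ :=
  (Finset.univ.filter (fun j => x j = s)).card

lemma df_C {S : Type*} [Fintype S] {n : ℕ} (x : Fin n → S) (y : ℕ → S) (k : ℕ)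
    (hpos : ∀ i, i < k → 0 < dfN x (y i)) (t : ℝ) (ht : 0 ≤ t) :
    (((Finset.range k).filter (fun i => (dfJ y i : ℝ) / dfN x (y i) ≤ t)).card : ℝ)
      ≤ t * n + Fintype.card S := by
  rw [Finset.card_eq_sum_card_fiberwise (f := y) (t := Finset.univ) (by simp)]
  have hsum : (n : ℝ) = ∑ s : S, (dfN x s : ℝ) := by
    have := Finset.card_eq_sum_card_fiberwise (s := (Finset.univ : Finset (Fin n))) (f := x)
      (t := Finset.univ) (by simp)
    simp only [Finset.card_univ, Fintype.card_fin] at this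
    unfold dfN
    exact_mod_cast this
  rw [hsum, Finset.mul_sum]
  have : (Fintype.card S : ℝ) = ∑ s : S, (1 : ℝ) := by simp
  rw [this, ← Finset.sum_add_distrib]
  push_cast
  apply Finset.sum_le_sum
  intro s _
  have h1 : ((((Finset.range k).filter (fun i => (dfJ y i : ℝ) / dfN x (y i) ≤ t))).filter
      (fun i => y i = s)).card ≤ (Finset.range (⌊t * dfN x s⌋₊ + 1)).card := by
    apply Finset.card_le_card_of_injOn (dfJ y)
    · intro i hi
      simp only [Finset.coe_filter, Finset.mem_filter, Finset.mem_range, Set.mem_ofPred_eq] at hi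
      obtain ⟨⟨hik, hle⟩, hs⟩ := hi
      have hp := hpos i hik
      rw [hs] at hle hp
      have hp' : (0 : ℝ) < dfN x s := by exact_mod_cast hp
      rw [div_le_iff₀ hp'] at hle
      simp only [Finset.coe_range, Set.mem_Iio]
      have := Nat.le_floor hle
      omega
    · have key : ∀ i j, i < j → y i = s → y j = s → dfJ y i < dfJ y j := by
        intro i j hij hi hj
        unfold dfJ
        apply Finset.card_lt_card
        rw [Finset.ssubset_iff_of_subset]
        · exact ⟨i, by simp [hij, hi, hj], by simp⟩
        · intro a
          simp only [Finset.mem_filter, Finset.mem_range, hi, hj]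
          exact fun h => ⟨h.1.trans hij, h.2⟩
      intro i hi j hj hij
      simp only [Finset.coe_filter, Finset.mem_filter, Finset.mem_range, Set.mem_ofPred_eq] at hi hj
      rcases lt_trichotomy i j with h | h | h
      · have := key i j h hi.2 hj.2; omega
      · exact h
      · have := key j i h hj.2 hi.2; omega
  rw [Finset.card_range] at h1
  have h2 : (⌊t * dfN x s⌋₊ : ℝ) ≤ t * dfN x s := Nat.floor_le (by positivity)
  have h3 : (((((Finset.range k).filter (fun i => (dfJ y i : ℝ) / dfN x (y i) ≤ t))).filter
      (fun i => y i = s)).card : ℝ) ≤ (⌊t * dfN x s⌋₊ : ℝ) + 1 := by exact_mod_cast h1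
  linarith

lemma df_all {S : Type*} {n : ℕ} (x : Fin n → S) (y : ℕ → S) (k : ℕ) :
    (Finset.univ.filter (fun f : Fin k → Fin n => ∀ i, x (f i) = y i)).card
      = ∏ i ∈ Finset.range k, dfN x (y i) := by
  have : (Finset.univ.filter (fun f : Fin k → Fin n => ∀ i, x (f i) = y i))
     = Fintype.piFinset (fun i : Fin k => Finset.univ.filter (fun j => x j = y i)) := by
    ext f; simp
  rw [this, Fintype.card_piFinset, Finset.prod_range (fun i => dfN x (y i))]
  rfl

lemma df_inj {S : Type*} {n : ℕ} (x : Fin n → S) (y : ℕ → S) (k : ℕ) :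
    (Finset.univ.filter (fun f : Fin k → Fin n => Function.Injective f ∧ ∀ i, x (f i) = y i)).card
      ≤ ∏ i ∈ Finset.range k, (dfN x (y i) - dfJ y i) := by
  induction k with
  | zero => simp; exact Finset.card_le_one_of_subsingleton _
  | succ k ih =>
    rw [Finset.prod_range_succ, mul_comm]
    refine le_trans (Finset.card_le_mul_card_image_of_maps_to
      (t := Finset.univ.filter (fun f : Fin k → Fin n => Function.Injective f ∧ ∀ i, x (f i) = y i))
      (f := fun f => fun i : Fin k => f i.castSucc) ?_ (dfN x (y k) - dfJ y k) ?_)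
      (Nat.mul_le_mul_left _ ih)
    · intro f hf
      simp only [Finset.mem_filter, Finset.mem_univ, true_and] at hf ⊢
      exact ⟨hf.1.comp (Fin.castSucc_injective k), fun i => by simpa using hf.2 i.castSucc⟩
    · intro g hg
      simp only [Finset.mem_filter, Finset.mem_univ, true_and] at hg
      have hU : ((Finset.univ.filter (fun j => x j = y k)) \
          ((Finset.univ.filter (fun i : Fin k => y i = y k)).image g)).card
          = dfN x (y k) - dfJ y k := by
        rw [Finset.card_sdiff_of_subset, Finset.card_image_of_injective _ hg.1]
        · congr 1
          unfold dfJ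
          refine Finset.card_bij (fun i _ => (i : ℕ)) ?_ ?_ ?_
          · intro i hi; simpa using hi
          · intro i _ j _ h; exact Fin.ext h
          · intro j hj
            simp only [Finset.mem_filter, Finset.mem_range] at hj
            exact ⟨⟨j, hj.1⟩, by simpa using hj.2, rfl⟩
        · intro j hj
          simp only [Finset.mem_image, Finset.mem_filter, Finset.mem_univ, true_and] at hj ⊢
          obtain ⟨i, hi, rfl⟩ := hj
          rw [hg.2, hi]
      rw [← hU]
      apply Finset.card_le_card_of_injOn (fun f => f (Fin.last k))
      · intro f hf
        simp only [Finset.coe_filter, Finset.mem_filter, Finset.mem_univ, true_and, Set.mem_ofPred_eq] at hf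
        obtain ⟨⟨hi, hx⟩, hgf⟩ := hf
        simp only [Finset.coe_sdiff, Set.mem_sdiff, Finset.mem_coe, Finset.mem_filter, Finset.mem_univ, true_and,
          Finset.mem_image, not_exists, not_and]
        refine ⟨by simpa using hx (Fin.last k), ?_⟩
        intro i _ h
        rw [← hgf] at h
        have := hi h
        exact absurd this (Fin.castSucc_lt_last i).ne
      · intro f hf f' hf' h
        simp only [Finset.coe_filter, Finset.mem_filter, Finset.mem_univ, true_and, Set.mem_ofPred_eq] at hf hf'
        funext i
        refine Fin.lastCases h (fun i => ?_) i
        exact congrFun (hf.2.trans hf'.2.symm) i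

/-- per-word inequality -/
lemma df_word {S : Type*} [Fintype S] {n k : ℕ} (hn : 0 < n) (hk : k ≤ n)
    (x : Fin n → S) (y : ℕ → S) :
    (1 - (Fintype.card S * k : ℝ) / n) * (n : ℝ) ^ k *
      ((Finset.univ.filter (fun f : Fin k → Fin n =>
        Function.Injective f ∧ ∀ i, x (f i) = y i)).card : ℝ)
    ≤ n.descFactorial k *
      ((Finset.univ.filter (fun f : Fin k → Fin n => ∀ i, x (f i) = y i)).card : ℝ) := by
  have hn' : (0 : ℝ) < n := by exact_mod_cast hn
  set I := (Finset.univ.filter (fun f : Fin k → Fin n =>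
        Function.Injective f ∧ ∀ i, x (f i) = y i)).card with hI
  have hIle := df_inj x y k
  rw [← hI] at hIle
  by_cases hz : I = 0
  · rw [hz]; simp; positivity
  have hlt : ∀ i ∈ Finset.range k, dfJ y i < dfN x (y i) := by
    intro i hi
    by_contra hcon
    have : ∏ i ∈ Finset.range k, (dfN x (y i) - dfJ y i) = 0 :=
      Finset.prod_eq_zero hi (by omega)
    omega
  set v : ℕ → ℝ := fun i => (dfJ y i : ℝ) / dfN x (y i) with hv
  have hA := df_A (n : ℝ) (Fintype.card S : ℝ) hn' v k (Finset.range k) (by simp)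
    (by have : (k : ℝ) ≤ n := by exact_mod_cast hk
        have : (0 : ℝ) ≤ Fintype.card S := by positivity
        linarith)
    (fun i _ => by positivity)
    (fun i hi => by
      have := hlt i hi
      apply div_le_one_of_le₀ _ (by positivity)
      exact_mod_cast this.le)
    (fun t ht => df_C x y k (fun i hi => by
      have := hlt i (Finset.mem_range.2 hi); omega) t ht)
  have hB := df_B n (Fintype.card S) hn k hk
  have hk1 : (k : ℝ) / n ≤ 1 := by
    apply div_le_one_of_le₀ _ hn'.le
    exact_mod_cast hk
  have hbern : 1 - (Fintype.card S * k : ℝ) / n ≤ (1 - (k : ℝ) / n) ^ (Fintype.card S) := by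
    have := one_add_mul_le_pow (a := -((k : ℝ) / n)) (by linarith) (Fintype.card S)
    have e : 1 - (Fintype.card S * k : ℝ) / n = 1 + (Fintype.card S : ℝ) * -((k : ℝ) / n) := by ring
    rw [e]
    exact this
  have hIp : (I : ℝ) ≤ (∏ i ∈ Finset.range k, (dfN x (y i) : ℝ)) * ∏ i ∈ Finset.range k, (1 - v i) := by
    rw [← Finset.prod_mul_distrib]
    have h1 : (I : ℝ) ≤ ((∏ i ∈ Finset.range k, (dfN x (y i) - dfJ y i) : ℕ) : ℝ) := by
      exact_mod_cast hIle
    refine h1.trans (le_of_eq ?_)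
    rw [Nat.cast_prod]
    apply Finset.prod_congr rfl
    intro i hi
    have := hlt i hi
    rw [Nat.cast_sub this.le]
    have : (0 : ℝ) < dfN x (y i) := by exact_mod_cast (by omega : 0 < dfN x (y i))
    simp only [hv]
    field_simp
  rw [df_all, df_desc n k hn hk, Nat.cast_prod]
  set D := ∏ i ∈ Finset.range k, (dfN x (y i) : ℝ) with hD
  have hD0 : 0 ≤ D := Finset.prod_nonneg (fun i _ => by positivity)
  have hp0 : 0 ≤ (1 - (k : ℝ) / n) ^ (Fintype.card S) := by
    apply pow_nonneg; linarith
  calc _ ≤ (1 - (k : ℝ) / n) ^ (Fintype.card S) * (n : ℝ) ^ k * I := by gcongr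
    _ ≤ (1 - (k : ℝ) / n) ^ (Fintype.card S) * (n : ℝ) ^ k * (D * ∏ i ∈ Finset.range k, (1 - v i)) := by
      gcongr
    _ ≤ (1 - (k : ℝ) / n) ^ (Fintype.card S) * (n : ℝ) ^ k *
        (D * ∏ l ∈ Finset.range k, (1 - ((l : ℝ) + 1 - (Fintype.card S : ℝ)) / n)) := by
      gcongr
    _ = (n : ℝ) ^ k * D * ((1 - (k : ℝ) / n) ^ (Fintype.card S) *
        ∏ l ∈ Finset.range k, (1 - ((l : ℝ) + 1 - (Fintype.card S : ℝ)) / n)) := by ring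
    _ ≤ (n : ℝ) ^ k * D * ∏ l ∈ Finset.range k, (1 - (l : ℝ) / n) := by gcongr
    _ = _ := by ring

/-- pointwise inequality, finite case -/
lemma df_pw_fin {S : Type*} [Finite S] {n k : ℕ} (hn : 0 < n) (hk : k ≤ n)
    (x : Fin n → S) (A : Set (Fin k → S)) :
    (1 - (Nat.card S * k : ℝ) / n) * (n : ℝ) ^ k *
      ((Finset.univ.filter (fun f : Fin k → Fin n =>
        Function.Injective f ∧ (fun i => x (f i)) ∈ A)).card : ℝ)
    ≤ n.descFactorial k *
      ((Finset.univ.filter (fun f : Fin k → Fin n => (fun i => x (f i)) ∈ A)).card : ℝ) := by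
  have := Fintype.ofFinite S
  rw [Nat.card_eq_fintype_card]
  rw [Finset.card_eq_sum_card_fiberwise (f := fun f : Fin k → Fin n => fun i => x (f i))
    (s := Finset.univ.filter (fun f : Fin k → Fin n =>
        Function.Injective f ∧ (fun i => x (f i)) ∈ A))
    (t := Finset.univ.filter (fun y => y ∈ A)) (by intro f; simp),
    Finset.card_eq_sum_card_fiberwise (f := fun f : Fin k → Fin n => fun i => x (f i))
    (s := Finset.univ.filter (fun f : Fin k → Fin n => (fun i => x (f i)) ∈ A))
    (t := Finset.univ.filter (fun y => y ∈ A)) (by intro f; simp)]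
  push_cast
  rw [Finset.mul_sum, Finset.mul_sum]
  apply Finset.sum_le_sum
  intro y hy
  simp only [Finset.mem_filter, Finset.mem_univ, true_and] at hy
  have h := df_word hn hk x (fun i => if h : i < k then y ⟨i, h⟩ else x ⟨0, hn⟩)
  simp only [Fin.is_lt, dite_true, Fin.eta] at h
  have e1 : (Finset.univ.filter (fun f : Fin k → Fin n =>
        Function.Injective f ∧ (fun i => x (f i)) ∈ A)).filter (fun f => (fun i => x (f i)) = y)
      = Finset.univ.filter (fun f : Fin k → Fin n =>
        Function.Injective f ∧ ∀ i, x (f i) = y i) := by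
    ext f
    simp only [Finset.mem_filter, Finset.mem_univ, true_and, funext_iff]
    constructor
    · rintro ⟨⟨h1, _⟩, h2⟩; exact ⟨h1, h2⟩
    · rintro ⟨h1, h2⟩
      exact ⟨⟨h1, by rw [show (fun i => x (f i)) = y from funext h2]; exact hy⟩, h2⟩
  have e2 : (Finset.univ.filter (fun f : Fin k → Fin n =>
        (fun i => x (f i)) ∈ A)).filter (fun f => (fun i => x (f i)) = y)
      = Finset.univ.filter (fun f : Fin k → Fin n => ∀ i, x (f i) = y i) := by
    ext f
    simp only [Finset.mem_filter, Finset.mem_univ, true_and, funext_iff]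
    constructor
    · rintro ⟨_, h2⟩; exact h2
    · rintro h2
      exact ⟨by rw [show (fun i => x (f i)) = y from funext h2]; exact hy, h2⟩
  rw [e1, e2]
  exact h

/-- pointwise inequality, general case -/
lemma df_pw_gen {S : Type*} {n k : ℕ} (hn : 0 < n) (hk : k ≤ n)
    (x : Fin n → S) (A : Set (Fin k → S)) :
    (1 - (k * (k - 1) : ℝ) / (2 * n)) * (n : ℝ) ^ k *
      ((Finset.univ.filter (fun f : Fin k → Fin n =>
        Function.Injective f ∧ (fun i => x (f i)) ∈ A)).card : ℝ)
    ≤ n.descFactorial k *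
      ((Finset.univ.filter (fun f : Fin k → Fin n => (fun i => x (f i)) ∈ A)).card : ℝ) := by
  rw [df_desc n k hn hk]
  have h := df_birthday n k hn hk
  have h2 : ((Finset.univ.filter (fun f : Fin k → Fin n =>
        Function.Injective f ∧ (fun i => x (f i)) ∈ A)).card : ℝ) ≤
      ((Finset.univ.filter (fun f : Fin k → Fin n => (fun i => x (f i)) ∈ A)).card : ℝ) := by
    norm_cast
    apply Finset.card_le_card
    intro f; simp
  have h3 : 0 ≤ ∏ l ∈ Finset.range k, (1 - (l : ℝ) / n) := by
    apply Finset.prod_nonneg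
    intro l hl
    have := Finset.mem_range.1 hl
    rw [sub_nonneg]
    apply div_le_one_of_le₀ _ (by positivity)
    exact_mod_cast (by omega : l ≤ n)
  rw [mul_comm ((n : ℝ) ^ k)]
  gcongr
end count

section meas
open Classical

lemma df_int {Ω : Type*} [MeasurableSpace Ω] (ℙ : Measure Ω) [IsProbabilityMeasure ℙ]
    {ι : Type*} (F : Finset ι) (E : ι → Set Ω) (hE : ∀ i, MeasurableSet (E i)) :
    Integrable (fun ω => ((F.filter (fun i => ω ∈ E i)).card : ℝ)) ℙ ∧
    ∫ ω, ((F.filter (fun i => ω ∈ E i)).card : ℝ) ∂ℙ = ∑ i ∈ F, (ℙ (E i)).toReal := by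
  have h : (fun ω => ((F.filter (fun i => ω ∈ E i)).card : ℝ))
      = fun ω => ∑ i ∈ F, (E i).indicator (fun _ => (1 : ℝ)) ω := by
    funext ω
    rw [Finset.card_filter]
    push_cast
    rfl
  have hi : ∀ i ∈ F, Integrable ((E i).indicator (fun _ => (1 : ℝ))) ℙ :=
    fun i _ => (integrable_const _).indicator (hE i)
  rw [h]
  refine ⟨integrable_finsetSum _ hi, ?_⟩
  rw [integral_finsetSum _ hi]
  apply Finset.sum_congr rfl
  intro i _
  rw [integral_indicator (hE i)]
  simp [Measure.real]

/-- the empirical measure -/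
noncomputable def dfEmp {S : Type*} [MeasurableSpace S] {n : ℕ} (x : Fin n → S) : Measure S :=
  (n : ENNReal)⁻¹ • ∑ i, Measure.dirac (x i)

lemma dfEmp_apply {S : Type*} [MeasurableSpace S] {n : ℕ} (x : Fin n → S) (B : Set S) (hB : MeasurableSet B) :
    dfEmp x B = (n : ENNReal)⁻¹ * ∑ i, B.indicator 1 (x i) := by
  simp [dfEmp, Measure.dirac_apply' _ hB]

lemma dfEmp_prob {S : Type*} [MeasurableSpace S] {n : ℕ} (hn : 0 < n) (x : Fin n → S) :
    IsProbabilityMeasure (dfEmp x) := by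
  constructor
  rw [dfEmp_apply _ _ MeasurableSet.univ]
  simp
  exact ENNReal.inv_mul_cancel (by simpa using hn.ne') (by simp)

lemma dfEmp_pi {S : Type*} [MeasurableSpace S] {n : ℕ} (hn : 0 < n) (x : Fin n → S) (k : ℕ) :
    Measure.pi (fun _ : Fin k => dfEmp x)
      = ((n : ENNReal)⁻¹) ^ k • ∑ f : Fin k → Fin n, Measure.dirac (fun i => x (f i)) := by
  have := dfEmp_prob hn x
  apply Measure.pi_eq
  intro s hs
  simp only [Measure.smul_apply, Measure.finsetSum_apply, smul_eq_mul]
  simp only [fun i => dfEmp_apply x (s i) (hs i)]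
  rw [Finset.prod_mul_distrib, Finset.prod_univ_sum]
  simp only [Finset.prod_const, Finset.card_univ, Fintype.card_fin, Fintype.piFinset_univ]
  congr 1
  apply Finset.sum_congr rfl
  intro f _
  rw [Measure.dirac_apply' _ (MeasurableSet.univ_pi hs)]
  simp only [Set.indicator_apply, Pi.one_apply, Set.mem_univ_pi]
  rw [Finset.prod_ite_zero]
  simp

lemma df_pi_meas {S : Type*} [MeasurableSpace S] (s₀ : S) (k : ℕ) :
    Measurable (fun π : Measure S => if π Set.univ = 1 then Measure.pi (fun _ : Fin k => π)
      else Measure.pi (fun _ : Fin k => Measure.dirac s₀)) := by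
  have hset : MeasurableSet {π : Measure S | π Set.univ = 1} :=
    (Measure.measurable_coe MeasurableSet.univ) (measurableSet_singleton 1)
  have hp : ∀ π : Measure S, IsProbabilityMeasure
      (if π Set.univ = 1 then Measure.pi (fun _ : Fin k => π)
      else Measure.pi (fun _ : Fin k => Measure.dirac s₀)) := by
    intro π
    split_ifs with h
    · have : IsProbabilityMeasure π := ⟨h⟩
      infer_instance
    · infer_instance
  refine Measurable.measure_of_isPiSystem_of_isProbabilityMeasure
    generateFrom_pi.symm isPiSystem_pi ?_
  rintro B ⟨s, hs, rfl⟩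
  simp only [Set.mem_pi, Set.mem_univ, true_imp_iff, Set.mem_ofPred_eq] at hs
  have : (fun π : Measure S => (if π Set.univ = 1 then Measure.pi (fun _ : Fin k => π)
      else Measure.pi (fun _ : Fin k => Measure.dirac s₀)) (Set.univ.pi s))
      = fun π => if π Set.univ = 1 then ∏ i, π (s i) else ∏ i, Measure.dirac s₀ (s i) := by
    funext π
    split_ifs with h
    · have : IsProbabilityMeasure π := ⟨h⟩
      rw [Measure.pi_pi]
    · rw [Measure.pi_pi]
  rw [this]
  refine Measurable.ite hset ?_ measurable_const
  exact Finset.measurable_fun_prod _ (fun i _ => Measure.measurable_coe (hs i))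

end meas

lemma df_exch {Ω : Type*} [MeasurableSpace Ω] (ℙ : Measure Ω)
    {S : Type*} [MeasurableSpace S] (n k : ℕ) (hkn : k ≤ n)
    (X : Fin n → Ω → S) (hmeas : ∀ i, Measurable (X i))
    (hexch : ∀ σ : Equiv.Perm (Fin n),
      Measure.map (fun ω (i : Fin n) => X (σ i) ω) ℙ
        = Measure.map (fun ω (i : Fin n) => X i ω) ℙ)
    (f : Fin k → Fin n) (hf : Function.Injective f) (A : Set (Fin k → S)) (hA : MeasurableSet A) :
    ℙ {ω | (fun i => X (f i) ω) ∈ A} = ℙ {ω | (fun i => X (Fin.castLE hkn i) ω) ∈ A} := by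
  obtain ⟨σ, hσ⟩ : ∃ σ : Equiv.Perm (Fin n), ∀ i, σ (Fin.castLE hkn i) = f i := by
    have hc : Function.Injective (Fin.castLE hkn) := Fin.castLE_injective hkn
    let e : Set.range (Fin.castLE hkn) ≃ Set.range f :=
      (Equiv.ofInjective _ hc).symm.trans (Equiv.ofInjective _ hf)
    obtain ⟨σ, h⟩ : ∃ σ : Equiv.Perm (Fin n), ∀ z : Set.range (Fin.castLE hkn), σ z = e z := by
      classical
      refine ⟨Equiv.extendSubtype (p := fun z => z ∈ Set.range (Fin.castLE hkn))
        (q := fun z => z ∈ Set.range f) e, fun z => ?_⟩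
      exact Equiv.extendSubtype_apply_of_mem (p := fun z => z ∈ Set.range (Fin.castLE hkn))
        (q := fun z => z ∈ Set.range f) e z z.2
    refine ⟨σ, fun i => ?_⟩
    rw [h ⟨Fin.castLE hkn i, i, rfl⟩]
    simp only [e, Equiv.trans_apply]
    have : (Equiv.ofInjective _ hc).symm ⟨Fin.castLE hkn i, i, rfl⟩ = i :=
      Equiv.ofInjective_symm_apply hc i
    rw [this]
    rfl
  have hr : Measurable (fun (z : Fin n → S) (i : Fin k) => z (Fin.castLE hkn i)) := by fun_prop
  have h := congrArg (fun m => m ((fun (z : Fin n → S) (i : Fin k) => z (Fin.castLE hkn i)) ⁻¹' A))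
    (hexch σ)
  rw [Measure.map_apply (by fun_prop) (hr hA), Measure.map_apply (by fun_prop) (hr hA)] at h
  simp only [Set.preimage, Set.mem_ofPred_eq, hσ] at h
  exact h

open Classical in
lemma df_bound {Ω : Type*} [MeasurableSpace Ω] (ℙ : Measure Ω) [IsProbabilityMeasure ℙ]
    {S : Type*} [MeasurableSpace S] (n k : ℕ) (hkn : k ≤ n) (hn : 0 < n)
    (X : Fin n → Ω → S) (hmeas : ∀ i, Measurable (X i))
    (P Q : Measure (Fin k → S)) [IsProbabilityMeasure P] [IsProbabilityMeasure Q]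
    (hP : ∀ f : Fin k → Fin n, Function.Injective f → ∀ A, MeasurableSet A →
      ℙ {ω | (fun i => X (f i) ω) ∈ A} = P A)
    (hQ : ∀ A, MeasurableSet A →
      Q A = ((n : ENNReal)⁻¹) ^ k * ∑ f : Fin k → Fin n, ℙ {ω | (fun i => X (f i) ω) ∈ A})
    (δ : ℝ) (hδ0 : 0 ≤ δ)
    (hδ : ∀ (x : Fin n → S) (A : Set (Fin k → S)), (1 - δ) * (n : ℝ) ^ k *
      ((Finset.univ.filter (fun f : Fin k → Fin n =>
        Function.Injective f ∧ (fun i => x (f i)) ∈ A)).card : ℝ)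
      ≤ n.descFactorial k *
      ((Finset.univ.filter (fun f : Fin k → Fin n => (fun i => x (f i)) ∈ A)).card : ℝ))
    (A : Set (Fin k → S)) (hA : MeasurableSet A) :
    |(P A).toReal - (Q A).toReal| ≤ δ := by
  have hn' : (0 : ℝ) < n := by exact_mod_cast hn
  have key : ∀ A, MeasurableSet A → (P A).toReal - (Q A).toReal ≤ δ := by
    intro A hA
    have hE : ∀ f : Fin k → Fin n, MeasurableSet {ω | (fun i => X (f i) ω) ∈ A} := by
      intro f
      have : Measurable (fun ω (i : Fin k) => X (f i) ω) := by fun_prop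
      exact this hA
    obtain ⟨i1, e1⟩ := df_int ℙ (Finset.univ.filter (fun f : Fin k → Fin n => Function.Injective f))
      (fun f => {ω | (fun i => X (f i) ω) ∈ A}) hE
    obtain ⟨i2, e2⟩ := df_int ℙ (Finset.univ : Finset (Fin k → Fin n))
      (fun f => {ω | (fun i => X (f i) ω) ∈ A}) hE
    have hint := integral_mono (i1.const_mul ((1 - δ) * (n : ℝ) ^ k))
      (i2.const_mul (n.descFactorial k : ℝ)) (fun ω => by
        have := hδ (fun i => X i ω) A
        simp only [Finset.filter_filter]
        exact this)
    rw [integral_const_mul, integral_const_mul, e1, e2] at hint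
    have hcard : (Finset.univ.filter (fun f : Fin k → Fin n => Function.Injective f)).card
        = n.descFactorial k := by
      have h1 := Fintype.card_embedding_eq (α := Fin k) (β := Fin n)
      rw [Fintype.card_fin, Fintype.card_fin] at h1
      rw [← h1, ← Fintype.card_subtype]
      exact Fintype.card_congr (Equiv.subtypeInjectiveEquivEmbedding _ _)
    have s1 : ∑ f ∈ Finset.univ.filter (fun f : Fin k → Fin n => Function.Injective f),
        (ℙ {ω | (fun i => X (f i) ω) ∈ A}).toReal = n.descFactorial k * (P A).toReal := by
      rw [Finset.sum_congr rfl (g := fun _ => (P A).toReal), Finset.sum_const, hcard, nsmul_eq_mul]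
      intro f hf
      rw [hP f (by simpa using hf) A hA]
    have s2 : ∑ f : Fin k → Fin n,
        (ℙ {ω | (fun i => X (f i) ω) ∈ A}).toReal = (n : ℝ) ^ k * (Q A).toReal := by
      rw [hQ A hA, ENNReal.toReal_mul, ENNReal.toReal_sum (fun f _ => measure_ne_top _ _)]
      simp only [ENNReal.toReal_pow, ENNReal.toReal_inv, ENNReal.toReal_natCast]
      rw [← mul_assoc, ← mul_pow, mul_inv_cancel₀ hn'.ne', one_pow, one_mul]
    rw [s1, s2] at hint
    have hd : (0 : ℝ) < n.descFactorial k := by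
      exact_mod_cast Nat.pos_of_ne_zero (by rw [Ne, Nat.descFactorial_eq_zero_iff_lt]; omega)
    have h3 : (1 - δ) * (P A).toReal ≤ (Q A).toReal := by
      have hc : 0 < (n : ℝ) ^ k * n.descFactorial k := by positivity
      refine le_of_mul_le_mul_left ?_ hc
      linarith
    have h4 : (P A).toReal ≤ 1 := by
      have := prob_le_one (μ := P) (s := A)
      exact ENNReal.toReal_mono ENNReal.one_ne_top this
    nlinarith
  rw [abs_le]
  refine ⟨?_, key A hA⟩
  have h := key Aᶜ hA.compl
  have c1 := probReal_compl_eq_one_sub (μ := P) hA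
  have c2 := probReal_compl_eq_one_sub (μ := Q) hA
  simp only [Measure.real] at c1 c2
  rw [c1, c2] at h
  linarith

/-- **Diaconis–Freedman finite approximation theorem.** If `(X_1, ..., X_n)` is exchangeable
with values in a measurable space `S` and `k ≤ n`, then there is a mixture `Q` of i.i.d. laws
on `S^k` whose total variation distance (`d_TV(P,Q) = 2 sup_A |P(A) - Q(A)|`) from the law
`P` of `(X_1, ..., X_k)` is at most `2|S|k/n` when `S` is finite, and at most `k(k-1)/n` in
general. -/
theorem diaconis_freedman_finite_approximation
    {Ω : Type*} [MeasurableSpace Ω] (ℙ : Measure Ω) [IsProbabilityMeasure ℙ]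
    {S : Type*} [MeasurableSpace S]
    (n k : ℕ) (hkn : k ≤ n) (hn : 0 < n)
    (X : Fin n → Ω → S)
    (hmeas : ∀ i, Measurable (X i))
    (hexch : ∀ σ : Equiv.Perm (Fin n),
      Measure.map (fun ω (i : Fin n) => X (σ i) ω) ℙ
        = Measure.map (fun ω (i : Fin n) => X i ω) ℙ) :
    ∃ (μ : Measure (Measure S)) (Q : Measure (Fin k → S)),
      IsProbabilityMeasure μ ∧
      (∀ᵐ π ∂μ, IsProbabilityMeasure π) ∧
      Q = μ.bind (fun π => Measure.pi fun _ : Fin k => π) ∧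
      (∀ A : Set (Fin k → S), MeasurableSet A →
        2 * |((Measure.map (fun ω (i : Fin k) => X (Fin.castLE hkn i) ω) ℙ) A).toReal
              - (Q A).toReal| ≤ (k * (k - 1) : ℝ) / n) ∧
      (Finite S → ∀ A : Set (Fin k → S), MeasurableSet A →
        2 * |((Measure.map (fun ω (i : Fin k) => X (Fin.castLE hkn i) ω) ℙ) A).toReal
              - (Q A).toReal| ≤ (2 * Nat.card S * k : ℝ) / n) := by
  classical
  have hΩ : Nonempty Ω := nonempty_of_isProbabilityMeasure ℙ
  obtain ⟨ω₀⟩ := hΩ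
  set s₀ : S := X ⟨0, hn⟩ ω₀
  have hemp : Measurable (fun ω => dfEmp (fun i => X i ω)) := by
    apply Measure.measurable_of_measurable_coe
    intro B hB
    simp only [dfEmp_apply _ B hB]
    apply Measurable.const_mul
    apply Finset.measurable_fun_sum
    intro i _
    exact (measurable_one.indicator hB).comp (hmeas i)
  set μ : Measure (Measure S) := ℙ.map (fun ω => dfEmp (fun i => X i ω)) with hμ
  have hμp : IsProbabilityMeasure μ := Measure.isProbabilityMeasure_map hemp.aemeasurable
  have hset : MeasurableSet {π : Measure S | π Set.univ = 1} :=
    (Measure.measurable_coe MeasurableSet.univ) (measurableSet_singleton 1)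
  have hae1 : ∀ᵐ π ∂μ, π Set.univ = 1 := by
    rw [hμ, ae_map_iff hemp.aemeasurable hset]
    exact Filter.Eventually.of_forall fun ω => (dfEmp_prob hn _).measure_univ
  have hgm := df_pi_meas s₀ k
  set g := (fun π : Measure S => if π Set.univ = 1 then Measure.pi (fun _ : Fin k => π)
      else Measure.pi (fun _ : Fin k => Measure.dirac s₀)) with hg
  have hbind : μ.bind (fun π => Measure.pi fun _ : Fin k => π) = μ.bind g := by
    apply Measure.bind_congr_right
    filter_upwards [hae1] with π hπ
    simp [hg, hπ]
  have hQ : ∀ A, MeasurableSet A → (μ.bind (fun π => Measure.pi fun _ : Fin k => π)) A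
      = ((n : ENNReal)⁻¹) ^ k * ∑ f : Fin k → Fin n, ℙ {ω | (fun i => X (f i) ω) ∈ A} := by
    intro A hA
    have hgA : Measurable (fun π => g π A) := (Measure.measurable_coe hA).comp hgm
    rw [hbind, Measure.bind_apply hA hgm.aemeasurable, hμ, lintegral_map hgA hemp]
    have hE : ∀ f : Fin k → Fin n, MeasurableSet {ω | (fun i => X (f i) ω) ∈ A} := by
      intro f
      have : Measurable (fun ω (i : Fin k) => X (f i) ω) := by fun_prop
      exact this hA
    have e : ∀ ω, g (dfEmp (fun i => X i ω)) A = ((n : ENNReal)⁻¹) ^ k *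
        ∑ f : Fin k → Fin n, ({ω | (fun i => X (f i) ω) ∈ A}).indicator 1 ω := by
      intro ω
      have h1 : g (dfEmp (fun i => X i ω)) = Measure.pi (fun _ : Fin k => dfEmp (fun i => X i ω)) := by
        simp only [hg]
        rw [if_pos (dfEmp_prob hn _).measure_univ]
      rw [h1, dfEmp_pi hn]
      simp only [Measure.smul_apply, Measure.finsetSum_apply, smul_eq_mul, Measure.dirac_apply' _ hA]
      rfl
    simp only [e]
    have hm : ∀ f : Fin k → Fin n,
        Measurable (({ω | (fun i => X (f i) ω) ∈ A}).indicator (1 : Ω → ENNReal)) :=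
      fun f => measurable_one.indicator (hE f)
    rw [lintegral_const_mul _ (Finset.measurable_fun_sum _ (fun f _ => hm f)),
      lintegral_finsetSum _ (fun f _ => hm f)]
    simp only [lintegral_indicator_one (hE _)]
  have hQp : IsProbabilityMeasure (μ.bind (fun π => Measure.pi fun _ : Fin k => π)) := by
    constructor
    rw [hQ _ MeasurableSet.univ]
    simp
    rw [← mul_pow, ENNReal.inv_mul_cancel (by simpa using hn.ne') (by simp), one_pow]
  have hXm : Measurable (fun ω (i : Fin k) => X (Fin.castLE hkn i) ω) := by fun_prop
  have hPp : IsProbabilityMeasure (Measure.map (fun ω (i : Fin k) => X (Fin.castLE hkn i) ω) ℙ) :=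
    Measure.isProbabilityMeasure_map hXm.aemeasurable
  have hP : ∀ f : Fin k → Fin n, Function.Injective f → ∀ A, MeasurableSet A →
      ℙ {ω | (fun i => X (f i) ω) ∈ A}
        = (Measure.map (fun ω (i : Fin k) => X (Fin.castLE hkn i) ω) ℙ) A := by
    intro f hf A hA
    rw [df_exch ℙ n k hkn X hmeas hexch f hf A hA, Measure.map_apply hXm hA]
    rfl
  have hn' : (0 : ℝ) < n := by exact_mod_cast hn
  refine ⟨μ, _, hμp, ?_, rfl, ?_, ?_⟩
  · filter_upwards [hae1] with π hπ
    exact ⟨hπ⟩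
  · intro A hA
    have hkk : 0 ≤ (k * (k - 1) : ℝ) / (2 * n) := by
      apply div_nonneg _ (by positivity)
      rcases k with _ | k
      · simp
      · push_cast
        have : (0 : ℝ) ≤ k := by positivity
        nlinarith
    have h := df_bound ℙ n k hkn hn X hmeas _ _ hP hQ ((k * (k - 1) : ℝ) / (2 * n)) hkk
      (fun x A => df_pw_gen hn hkn x A) A hA
    have e : (k * (k - 1) : ℝ) / n = 2 * ((k * (k - 1) : ℝ) / (2 * n)) := by field_simp
    rw [e]
    linarith
  · intro hS A hA
    have h := df_bound ℙ n k hkn hn X hmeas _ _ hP hQ ((Nat.card S * k : ℝ) / n) (by positivity)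
      (fun x A => df_pw_fin hn hkn x A) A hA
    have e : (2 * Nat.card S * k : ℝ) / n = 2 * ((Nat.card S * k : ℝ) / n) := by ring
    rw [e]
    linarith
end

section
/- Let X = (X_1, ..., X_n) be a finite exchangeable sequence of random variables, each taking values in a measurable space S. Then X can be represented as a mixture of urn sequences: there exists a probability measure μ on S^n such that for every measurable A ⊆ S^n, Pr(X ∈ A) = ∫_{S^n} Pr(σ_x(x) ∈ A) dμ(x), where for each x ∈ S^n, σ_x is a uniform random permutation of {1, ..., n} applied to the deterministic tuple x. -/
open MeasureTheory

/-- **Urn representation of finite exchangeable sequences (Kallenberg).** A finite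
exchangeable sequence `X = (X_1, ..., X_n)` with values in a measurable space `S` is a
mixture of urn sequences: there is a probability measure `μ` on `S^n` such that for every
measurable `A ⊆ S^n`, `Pr(X ∈ A) = ∫ Pr(σ_x(x) ∈ A) dμ(x)`, where `σ_x` is a uniform random
permutation, so that `Pr(σ_x(x) ∈ A)` is the fraction of permutations `σ` with `x ∘ σ ∈ A`. -/
theorem urn_representation
    {Ω : Type*} [MeasurableSpace Ω] (ℙ : Measure Ω) [IsProbabilityMeasure ℙ]
    {S : Type*} [MeasurableSpace S]
    (n : ℕ)
    (X : Fin n → Ω → S)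
    (hmeas : ∀ i, Measurable (X i))
    (hexch : ∀ σ : Equiv.Perm (Fin n),
      Measure.map (fun ω (i : Fin n) => X (σ i) ω) ℙ
        = Measure.map (fun ω (i : Fin n) => X i ω) ℙ) :
    ∃ μ : Measure (Fin n → S), IsProbabilityMeasure μ ∧
      ∀ A : Set (Fin n → S), MeasurableSet A →
        (Measure.map (fun ω (i : Fin n) => X i ω) ℙ) A
          = ∫⁻ x, (∑ σ : Equiv.Perm (Fin n),
              Set.indicator A (fun _ => (1 : ENNReal)) (fun i => x (σ i)))
              / (Nat.factorial n : ENNReal) ∂μ := by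
  have hX : Measurable (fun ω (i : Fin n) => X i ω) := measurable_pi_lambda _ hmeas
  refine ⟨Measure.map (fun ω (i : Fin n) => X i ω) ℙ,
    Measure.isProbabilityMeasure_map hX.aemeasurable, ?_⟩
  intro A hA
  have hperm : ∀ σ : Equiv.Perm (Fin n), Measurable (fun (x : Fin n → S) (i : Fin n) => x (σ i)) :=
    fun σ => measurable_pi_lambda _ fun i => measurable_pi_apply (σ i)
  have hind : Measurable (Set.indicator A (fun _ => (1 : ENNReal))) :=
    measurable_const.indicator hA
  have hm : ∀ σ : Equiv.Perm (Fin n), Measurable (fun x : Fin n → S =>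
      Set.indicator A (fun _ => (1 : ENNReal)) (fun i => x (σ i))) :=
    fun σ => hind.comp (hperm σ)
  have key : ∀ σ : Equiv.Perm (Fin n),
      ∫⁻ x, Set.indicator A (fun _ => (1 : ENNReal)) (fun i => x (σ i))
        ∂(Measure.map (fun ω (i : Fin n) => X i ω) ℙ)
      = Measure.map (fun ω (i : Fin n) => X i ω) ℙ A := by
    intro σ
    rw [← lintegral_map hind (hperm σ), Measure.map_map (hperm σ) hX,
      lintegral_indicator_const hA, one_mul]
    exact congrArg (fun m : Measure (Fin n → S) => m A) (hexch σ)
  have hfac : (Nat.factorial n : ENNReal) ≠ 0 := by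
    exact_mod_cast Nat.factorial_ne_zero n
  simp only [div_eq_mul_inv]
  rw [lintegral_mul_const _ (Finset.measurable_fun_sum _ fun σ _ => hm σ),
    lintegral_finsetSum _ fun σ _ => hm σ, Finset.sum_congr rfl fun σ _ => key σ,
    Finset.sum_const, Finset.card_univ, Fintype.card_perm, Fintype.card_fin, nsmul_eq_mul,
    mul_comm, ← mul_assoc, ENNReal.inv_mul_cancel hfac (ENNReal.natCast_ne_top _), one_mul]
end

section
/- Let S be a measurable space equipped with a linear order ≺ whose ordered set Ord(S^n) = {(x_1, ..., x_n) ∈ S^n : x_1 ≺ ... ≺ x_n or more generally x_1 ⪯ ... ⪯ x_n} is measurable, and let X = (X_1, ..., X_n) be an arbitrary finite sequence of S-valued random variables. Then the mixing measure in the elementary-sequence decomposition can be chosen order respecting: there exist a probability measure μ on S^n with μ(A) = 0 for every measurable A ⊆ S^n disjoint from Ord(S^n), and for each x ∈ S^n a probability measure ν_x on Σ_n × Σ_n with both marginals uniform, such that for every measurable A ⊆ S^n, Pr(X ∈ A) = ∫_{Ord(S^n)} ν_x({(α, β) : (α∘β)(x) ∈ A}) dμ(x). -/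
open MeasureTheory

/-- Permutation groups are countable discrete spaces; equip them with the discrete
σ-algebra. -/
instance permMeasurableSpace (n : ℕ) : MeasurableSpace (Equiv.Perm (Fin n)) := ⊤



instance permDiscrete (n : ℕ) : DiscreteMeasurableSpace (Equiv.Perm (Fin n)) :=
  ⟨fun _ => trivial⟩

lemma exists_measurable_sorter {S : Type*} [MeasurableSpace S] [LinearOrder S] (n : ℕ)
    (hOrd : MeasurableSet {x : Fin n → S | Monotone x}) :
    ∃ τ : (Fin n → S) → Equiv.Perm (Fin n), Measurable τ ∧ ∀ y, Monotone (y ∘ τ y) := by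
  classical
  obtain ⟨e, he⟩ := exists_surjective_nat (Equiv.Perm (Fin n))
  have hex : ∀ y : Fin n → S, ∃ k, Monotone (y ∘ e k) := fun y => by
    obtain ⟨k, hk⟩ := he (Tuple.sort y)
    exact ⟨k, hk ▸ Tuple.monotone_sort y⟩
  refine ⟨fun y => e (Nat.find (hex y)), ?_, fun y => Nat.find_spec (hex y)⟩
  refine (measurable_from_top (f := e)).comp (measurable_find hex fun k => ?_)
  have : Measurable (fun y : Fin n → S => y ∘ e k) :=
    measurable_pi_lambda _ fun i => measurable_pi_apply _
  exact this hOrd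

lemma measurable_perm_action {S : Type*} [MeasurableSpace S] (n : ℕ) :
    Measurable (fun q : (Fin n → S) × Equiv.Perm (Fin n) => q.1 ∘ q.2) :=
  measurable_from_prod_countable_left fun g =>
    measurable_pi_lambda _ fun i => measurable_pi_apply (g i)

noncomputable def unifPerm (n : ℕ) : Measure (Equiv.Perm (Fin n)) :=
  ((Nat.factorial n : ENNReal))⁻¹ • Measure.count

lemma unifPerm_singleton (n : ℕ) (σ : Equiv.Perm (Fin n)) :
    unifPerm n {σ} = ((Nat.factorial n : ENNReal))⁻¹ := by
  simp [unifPerm]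

instance unifPerm_prob (n : ℕ) : IsProbabilityMeasure (unifPerm n) := ⟨by
  have h0 : (Nat.factorial n : ENNReal) ≠ 0 := by exact_mod_cast Nat.factorial_ne_zero n
  have : (Measure.count (Set.univ : Set (Equiv.Perm (Fin n)))) = (Nat.factorial n : ENNReal) := by
    rw [Measure.count_univ]
    simp [ENat.card_eq_coe_fintype_card, Fintype.card_perm]
  rw [unifPerm, Measure.smul_apply, this, smul_eq_mul,
    ENNReal.inv_mul_cancel h0 (ENNReal.natCast_ne_top _)]⟩

noncomputable def pairLaw (n : ℕ) (κ : Measure (Equiv.Perm (Fin n))) :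
    Measure (Equiv.Perm (Fin n) × Equiv.Perm (Fin n)) :=
  ((unifPerm n).prod κ).map (fun p => (p.1, p.1⁻¹ * p.2))

lemma pairLaw_apply (n : ℕ) (κ : Measure (Equiv.Perm (Fin n)))
    (B : Set (Equiv.Perm (Fin n) × Equiv.Perm (Fin n))) :
    pairLaw n κ B = ((unifPerm n).prod κ) {p | (p.1, p.1⁻¹ * p.2) ∈ B} :=
  Measure.map_apply (Measurable.of_discrete) (MeasurableSet.of_discrete)

/-- **Order-respecting decomposition into elementary sequences.** If `S` carries a linear
order whose set `Ord(S^n)` of nondecreasing `n`-tuples is measurable, then the mixing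
measure in the elementary-sequence decomposition of an arbitrary finite random sequence can
be chosen order respecting: `μ` vanishes on measurable sets disjoint from `Ord(S^n)`, and
`Pr(X ∈ A) = ∫_{Ord(S^n)} Pr((α∘β)(x) ∈ A) dμ(x)`. -/
theorem decomposition_into_elementary_sequences_order_respecting
    {Ω : Type*} [MeasurableSpace Ω] (ℙ : Measure Ω) [IsProbabilityMeasure ℙ]
    {S : Type*} [MeasurableSpace S] [LinearOrder S]
    (n : ℕ)
    (hOrd : MeasurableSet {x : Fin n → S | Monotone x})
    (X : Fin n → Ω → S)
    (hmeas : ∀ i, Measurable (X i)) :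
    ∃ (μ : Measure (Fin n → S))
      (ν : (Fin n → S) → Measure (Equiv.Perm (Fin n) × Equiv.Perm (Fin n))),
      IsProbabilityMeasure μ ∧
      (∀ A : Set (Fin n → S), MeasurableSet A →
        A ∩ {x : Fin n → S | Monotone x} = ∅ → μ A = 0) ∧
      (∀ x, IsProbabilityMeasure (ν x)) ∧
      (∀ x (σ : Equiv.Perm (Fin n)),
        Measure.map Prod.fst (ν x) {σ} = ((Nat.factorial n : ENNReal))⁻¹) ∧
      (∀ x (σ : Equiv.Perm (Fin n)),
        Measure.map Prod.snd (ν x) {σ} = ((Nat.factorial n : ENNReal))⁻¹) ∧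
      ∀ A : Set (Fin n → S), MeasurableSet A →
        (Measure.map (fun ω (i : Fin n) => X i ω) ℙ) A
          = ∫⁻ x in {x : Fin n → S | Monotone x},
              ν x {p | (fun i => x (p.1 (p.2 i))) ∈ A} ∂μ := by
  obtain ⟨τ, hτ, hmono⟩ := exists_measurable_sorter (S := S) n hOrd
  have hX : Measurable (fun ω (i : Fin n) => X i ω) := measurable_pi_lambda _ hmeas
  set P := Measure.map (fun ω (i : Fin n) => X i ω) ℙ with hP
  have : IsProbabilityMeasure P := Measure.isProbabilityMeasure_map hX.aemeasurable
  let T : (Fin n → S) → (Fin n → S) := fun y => y ∘ τ y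
  have hT : Measurable T := (measurable_perm_action n).comp (measurable_id.prodMk hτ)
  let γ : (Fin n → S) → Equiv.Perm (Fin n) := fun y => (τ y)⁻¹
  have hγ : Measurable γ := (Measurable.of_discrete (f := fun g : Equiv.Perm (Fin n) => g⁻¹)).comp hτ
  let κ := ProbabilityTheory.condDistrib γ T P
  have hnull : ∀ A : Set (Fin n → S), MeasurableSet A →
        A ∩ {x : Fin n → S | Monotone x} = ∅ → P.map T A = 0 := by
    intro A hA hd
    rw [Measure.map_apply hT hA]
    have : T ⁻¹' A = ∅ := by
      ext y
      simp only [Set.mem_preimage, Set.mem_empty_iff_false, iff_false]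
      intro hy
      have : T y ∈ A ∩ {x : Fin n → S | Monotone x} := ⟨hy, hmono y⟩
      rw [hd] at this
      exact this
    rw [this, measure_empty]
  refine ⟨P.map T, fun x => pairLaw n (κ x), Measure.isProbabilityMeasure_map hT.aemeasurable,
    hnull, fun x => Measure.isProbabilityMeasure_map Measurable.of_discrete.aemeasurable,
    ?_, ?_, ?_⟩
  · intro x σ
    rw [Measure.map_apply measurable_fst (MeasurableSet.of_discrete), pairLaw_apply]
    have : {p : Equiv.Perm (Fin n) × Equiv.Perm (Fin n) |
        (p.1, p.1⁻¹ * p.2) ∈ Prod.fst ⁻¹' {σ}} = {σ} ×ˢ Set.univ := by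
      ext p; simp
    rw [this, Measure.prod_prod, unifPerm_singleton, measure_univ, mul_one]
  · intro x σ
    rw [Measure.map_apply measurable_snd (MeasurableSet.of_discrete), pairLaw_apply,
      Measure.prod_apply_symm (MeasurableSet.of_discrete)]
    have : ∀ g : Equiv.Perm (Fin n), (fun a => (a, g)) ⁻¹'
        {p : Equiv.Perm (Fin n) × Equiv.Perm (Fin n) |
          (p.1, p.1⁻¹ * p.2) ∈ Prod.snd ⁻¹' {σ}} = {g * σ⁻¹} := by
      intro g; ext a
      simp only [Set.mem_preimage, Set.mem_ofPred_eq, Set.mem_singleton_iff]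
      rw [inv_mul_eq_iff_eq_mul, eq_mul_inv_iff_mul_eq, eq_comm]
    simp_rw [this, unifPerm_singleton]
    simp
  · intro A hA
    have hset : ∀ x : Fin n → S,
        pairLaw n (κ x) {p | (fun i => x (p.1 (p.2 i))) ∈ A} = κ x {g | x ∘ g ∈ A} := by
      intro x
      rw [pairLaw_apply]
      have : {p : Equiv.Perm (Fin n) × Equiv.Perm (Fin n) | (p.1, p.1⁻¹ * p.2) ∈
          {p : Equiv.Perm (Fin n) × Equiv.Perm (Fin n) | (fun i => x (p.1 (p.2 i))) ∈ A}}
          = Set.univ ×ˢ {g : Equiv.Perm (Fin n) | x ∘ g ∈ A} := by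
        ext p
        simp [Function.comp_def]
      rw [this, Measure.prod_prod, measure_univ, one_mul]
    simp_rw [hset]
    have hr : (P.map T).restrict {x : Fin n → S | Monotone x} = P.map T := by
      apply Measure.restrict_eq_self_of_ae_mem
      rw [ae_iff]
      exact hnull _ hOrd.compl (Set.compl_inter_self _)
    rw [hr]
    have hB : MeasurableSet ((fun q : (Fin n → S) × Equiv.Perm (Fin n) => q.1 ∘ q.2) ⁻¹' A) :=
      measurable_perm_action n hA
    have key := congrArg (fun m : Measure ((Fin n → S) × Equiv.Perm (Fin n)) => m ((fun q : (Fin n → S) × Equiv.Perm (Fin n) => q.1 ∘ q.2) ⁻¹' A))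
      (ProbabilityTheory.compProd_map_condDistrib (X := T) (Y := γ) (μ := P) hγ.aemeasurable)
    rw [Measure.compProd_apply hB, Measure.map_apply (hT.prodMk hγ) hB] at key
    refine Eq.trans ?_ key.symm
    congr 1
    ext y
    simp [T, γ, Function.comp_def]
end
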